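/- Let η(t) = t² e^{−t²/2}, let δ ∈ ℝ, and let G_δ be the Mellin transform of η(t)e(δt). Let χ be a primitive Dirichlet character mod q, q ≥ 1. Assume all nontrivial zeros ρ of L(s,χ) with |Im(ρ)| ≤ T₀ satisfy Re(ρ) = 1/2, where T₀ ≥ max(4π²|δ|, 100). Then ∑_{ρ nontrivial, |Im(ρ)| > T₀} |G_δ(ρ)| ≤ T₀ log(qT₀/2π) · (3.5 e^{−0.1598 T₀} + 0.64 e^{−0.1065 T₀²/(πδ)²}). -/

import Mathlib

open MeasureTheory Set

/-- `e(t) = e^{2πit}`. -/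
noncomputable def e2pi (t : ℝ) : ℂ := Complex.exp (2 * Real.pi * Complex.I * t)

/-- `G_δ`, the Mellin transform of `η(t) e(δt)` with `η(t) = t² e^{-t²/2}`. -/
noncomputable def Gdelta (δ : ℝ) (s : ℂ) : ℂ :=
  mellin (fun t => ((t^2 * Real.exp (-t^2 / 2) : ℝ) : ℂ) * e2pi (δ * t)) s


lemma halfplane_blaschke (S : Finset ℂ) : ∀ f : ℂ → ℂ, DiffContOnCl ℂ f {z | 0 < z.re} →
    (∀ z : ℂ, 0 < z.re → ‖f z‖ ≤ 1) → (∀ a ∈ S, 0 < a.re ∧ f a = 0) →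
    ∀ z : ℂ, 0 < z.re → ‖f z‖ ≤ ∏ a ∈ S, ‖(z - a) / (z + (starRingEnd ℂ) a)‖ := by
  classical
  induction S using Finset.induction_on with
  | empty => intro f _ hb _ z hz; simpa using hb z hz
  | insert a S haS ih =>
    intro f hd hb hzero z hz
    obtain ⟨ha, hfa⟩ := hzero a (Finset.mem_insert_self _ _)
    have hopen : IsOpen {z : ℂ | 0 < z.re} := isOpen_lt continuous_const Complex.continuous_re
    have hnhds : {z : ℂ | 0 < z.re} ∈ nhds a := hopen.mem_nhds ha
    have hclos : closure {z : ℂ | 0 < z.re} = {z : ℂ | 0 ≤ z.re} := by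
      exact Complex.closure_setOfPred_lt_re 0
    have hnhds' : closure {z : ℂ | 0 < z.re} ∈ nhds a := Filter.mem_of_superset hnhds subset_closure
    set g : ℂ → ℂ := fun z => dslope f a z * (z + (starRingEnd ℂ) a) with hg
    have hgd : DiffContOnCl ℂ g {z | 0 < z.re} := by
      constructor
      · have h1 := (Complex.differentiableOn_dslope hnhds).2 hd.differentiableOn
        exact h1.mul (by fun_prop)
      · have h1 := (continuousOn_dslope hnhds').2
          ⟨hd.continuousOn, hd.differentiableAt hopen ha⟩
        exact h1.mul (by fun_prop)
    have hclosb : ∀ z : ℂ, 0 ≤ z.re → ‖f z‖ ≤ 1 := by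
      intro z hz
      have hz' : z ∈ closure {z : ℂ | 0 < z.re} := by rw [hclos]; exact hz
      exact le_on_closure hb hd.continuousOn.norm continuousOn_const hz'
    have hgne : ∀ z, z ≠ a → g z = f z * ((z + (starRingEnd ℂ) a) / (z - a)) := by
      intro z hza
      have : z - a ≠ 0 := sub_ne_zero.2 hza
      simp only [hg, dslope_of_ne _ hza, slope, vsub_eq_sub, hfa, sub_zero, smul_eq_mul]
      field_simp
    have hbig : ∀ z : ℂ, 0 ≤ z.re → 2 * ‖a‖ < ‖z‖ → ‖g z‖ ≤ 3 := by
      intro z hz0 hz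
      have h1 : ‖z‖ - ‖a‖ ≤ ‖z - a‖ := norm_sub_norm_le z a
      have h0 : 0 ≤ ‖a‖ := norm_nonneg a
      have hpos : 0 < ‖z - a‖ := by linarith
      have hza : z ≠ a := by rintro rfl; simp at hpos
      rw [hgne z hza, norm_mul, norm_div]
      have h2 : ‖z + (starRingEnd ℂ) a‖ ≤ ‖z‖ + ‖a‖ := by
        simpa using norm_add_le z ((starRingEnd ℂ) a)
      have h3 : ‖z + (starRingEnd ℂ) a‖ / ‖z - a‖ ≤ 3 := by
        rw [div_le_iff₀ hpos]; linarith
      calc ‖f z‖ * (‖z + (starRingEnd ℂ) a‖ / ‖z - a‖) ≤ 1 * 3 := by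
            apply mul_le_mul (hclosb z hz0) h3 (by positivity) (by norm_num)
        _ = 3 := by norm_num
    have hgb : ∀ z : ℂ, 0 < z.re → ‖g z‖ ≤ 1 := by
      intro z hz
      refine PhragmenLindelof.right_half_plane_of_bounded_on_real hgd ?_ ?_ ?_ hz.le
      · refine ⟨1, by norm_num, 0, ?_⟩
        refine Asymptotics.IsBigO.of_bound 3 ?_
        rw [Filter.eventually_inf_principal]
        have : ∀ᶠ z in Bornology.cobounded ℂ, 2 * ‖a‖ < ‖z‖ :=
          tendsto_norm_cobounded_atTop.eventually (Filter.eventually_gt_atTop _)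
        filter_upwards [this] with z h1 h2
        simpa using hbig z (le_of_lt h2) h1
      · refine ⟨3, ?_⟩
        rw [Filter.eventually_map]
        filter_upwards [Filter.eventually_gt_atTop (2 * ‖a‖), Filter.eventually_ge_atTop 0] with x h1 h2
        apply hbig
        · simpa using h2
        · simpa [abs_of_nonneg h2] using h1
      · intro x
        have hza : ((x : ℂ) * Complex.I) ≠ a := by
          intro h; rw [← h] at ha; simp at ha
        rw [hgne _ hza, norm_mul, norm_div]
        have : ‖(x : ℂ) * Complex.I + (starRingEnd ℂ) a‖ = ‖(x : ℂ) * Complex.I - a‖ := by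
          rw [← Complex.norm_conj, ← norm_neg]; congr 1; simp; ring
        rw [this, div_self, mul_one]
        · apply hclosb; simp
        · rw [norm_ne_zero_iff]; exact sub_ne_zero.2 hza
    have hgz : ∀ c ∈ S, 0 < c.re ∧ g c = 0 := by
      intro c hc
      obtain ⟨h1, h2⟩ := hzero c (Finset.mem_insert_of_mem hc)
      refine ⟨h1, ?_⟩
      rw [hgne c (by rintro rfl; exact haS hc), h2, zero_mul]
    have := ih g hgd hgb hgz z hz
    rw [Finset.prod_insert haS]
    by_cases hza : z = a
    · subst hza; simp [hfa]
    · have hz1 : z - a ≠ 0 := sub_ne_zero.2 hza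
      have hz2 : z + (starRingEnd ℂ) a ≠ 0 := by
        intro h; have := congrArg Complex.re h; simp at this; linarith
      have hf : f z = ((z - a) / (z + (starRingEnd ℂ) a)) * g z := by
        rw [hgne z hza]; field_simp
      rw [hf, norm_mul]
      gcongr


lemma hz_mellin_strip_bound (f : ℝ → ℂ) (a b : ℝ)
    (hfa : MellinConvergent f a) (hfb : MellinConvergent f b) :
    ∃ C, ∀ s : ℂ, a ≤ s.re → s.re ≤ b → ‖mellin f s‖ ≤ C := by
  refine ⟨∫ t in Ioi (0:ℝ), (‖(t:ℂ) ^ ((a:ℂ) - 1) • f t‖ + ‖(t:ℂ) ^ ((b:ℂ) - 1) • f t‖), ?_⟩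
  intro s h1 h2
  refine norm_integral_le_of_norm_le (hfa.norm.add hfb.norm) ?_
  refine (ae_restrict_iff' measurableSet_Ioi).2 (.of_forall fun t (ht : 0 < t) => ?_)
  simp only [norm_smul]
  rw [← add_mul]
  gcongr
  rw [Complex.norm_cpow_eq_rpow_re_of_pos ht, Complex.norm_cpow_eq_rpow_re_of_pos ht,
    Complex.norm_cpow_eq_rpow_re_of_pos ht]
  simp only [Complex.sub_re, Complex.ofReal_re, Complex.one_re]
  rcases le_total 1 t with h | h
  · have := Real.rpow_le_rpow_of_exponent_le h (show s.re - 1 ≤ b - 1 by linarith)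
    have := Real.rpow_nonneg ht.le (a-1); linarith
  · have := Real.rpow_le_rpow_of_exponent_ge ht h (show a - 1 ≤ s.re - 1 by linarith)
    have := Real.rpow_nonneg ht.le (b-1); linarith

lemma hz_Lam0_bound (P : WeakFEPair ℂ) (a b : ℝ) :
    ∃ C, ∀ s : ℂ, a ≤ s.re → s.re ≤ b → ‖P.Λ₀ s‖ ≤ C :=
  hz_mellin_strip_bound P.f_modif a b (P.isStrongFEPair_toStrongFEPair.hasMellin a).1
    (P.isStrongFEPair_toStrongFEPair.hasMellin b).1

lemma hz_even_bound (x : UnitAddCircle) (a b : ℝ) :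
    ∃ C, ∀ s : ℂ, a ≤ s.re → s.re ≤ b → ‖HurwitzZeta.completedHurwitzZetaEven₀ x s‖ ≤ C := by
  obtain ⟨C, hC⟩ := hz_Lam0_bound (HurwitzZeta.hurwitzEvenFEPair x) (a/2) (b/2)
  refine ⟨C, fun s h1 h2 => ?_⟩
  have := hC (s/2) (by simp; linarith) (by simp; linarith)
  rw [HurwitzZeta.completedHurwitzZetaEven₀, norm_div]
  simp only [RCLike.norm_ofNat]
  linarith [norm_nonneg ((HurwitzZeta.hurwitzEvenFEPair x).Λ₀ (s / 2))]

lemma hz_odd_bound (x : UnitAddCircle) (a b : ℝ) :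
    ∃ C, ∀ s : ℂ, a ≤ s.re → s.re ≤ b → ‖HurwitzZeta.completedHurwitzZetaOdd x s‖ ≤ C := by
  obtain ⟨C, hC⟩ := hz_Lam0_bound (HurwitzZeta.hurwitzOddFEPair x) ((a+1)/2) ((b+1)/2)
  refine ⟨C, fun s h1 h2 => ?_⟩
  have := hC ((s+1)/2) (by simp; linarith) (by simp; linarith)
  have h3 : (HurwitzZeta.hurwitzOddFEPair x).Λ ((s+1)/2) = (HurwitzZeta.hurwitzOddFEPair x).Λ₀ ((s+1)/2) := by
    simp [WeakFEPair.Λ, HurwitzZeta.hurwitzOddFEPair]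
  rw [HurwitzZeta.completedHurwitzZetaOdd, norm_div, h3]
  simp only [RCLike.norm_ofNat]
  linarith [norm_nonneg ((HurwitzZeta.hurwitzOddFEPair x).Λ₀ ((s + 1)/ 2))]

lemma hz_completed_bound {N : ℕ} [NeZero N] (Φ : ZMod N → ℂ) (a b : ℝ) :
    ∃ C, ∀ s : ℂ, a ≤ s.re → s.re ≤ b → 2 ≤ ‖s‖ → ‖ZMod.completedLFunction Φ s‖ ≤ C := by
  choose Ce hCe using fun j : ZMod N => hz_even_bound (ZMod.toAddCircle j) a b
  choose Co hCo using fun j : ZMod N => hz_odd_bound (ZMod.toAddCircle j) a b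
  refine ⟨(N:ℝ)^(-a) * ∑ j, ‖Φ j‖ * Ce j + (N:ℝ)^(-a) * ∑ j, ‖Φ j‖ * Co j + (N:ℝ)^(-a) * ‖Φ 0‖
    + (N:ℝ)^(-a) * ‖∑ j, Φ j‖, fun s h1 h2 h3 => ?_⟩
  have hN : (1:ℝ) ≤ N := by exact_mod_cast NeZero.one_le
  have hNs : ‖(N:ℂ)^(-s)‖ ≤ (N:ℝ)^(-a) := by
    rw [Complex.norm_natCast_cpow_of_pos (NeZero.pos N)]
    exact Real.rpow_le_rpow_of_exponent_le hN (by simp; linarith)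
  have hNa : 0 ≤ (N:ℝ)^(-a) := by positivity
  have h1s : 1 ≤ ‖1 - s‖ := by
    have := norm_sub_norm_le s 1
    rw [norm_sub_rev]; simp at this; linarith
  rw [ZMod.completedLFunction_eq, ZMod.completedLFunction₀]
  refine (norm_sub_le _ _).trans (add_le_add ((norm_sub_le _ _).trans (add_le_add
    ((norm_add_le _ _).trans (add_le_add ?_ ?_)) ?_)) ?_)
  · rw [norm_mul]
    refine mul_le_mul hNs ((norm_sum_le _ _).trans (Finset.sum_le_sum fun j _ => ?_)) (norm_nonneg _) hNa
    rw [norm_mul]; gcongr; exact hCe j s h1 h2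
  · rw [norm_mul]
    refine mul_le_mul hNs ((norm_sum_le _ _).trans (Finset.sum_le_sum fun j _ => ?_)) (norm_nonneg _) hNa
    rw [norm_mul]; gcongr; exact hCo j s h1 h2
  · rw [norm_div, norm_mul, div_le_iff₀ (by linarith)]
    calc _ ≤ (N:ℝ)^(-a) * ‖Φ 0‖ * 1 := by rw [mul_one]; gcongr
      _ ≤ _ := by gcongr; linarith
  · rw [norm_div, norm_mul, div_le_iff₀ (by linarith)]
    calc _ ≤ (N:ℝ)^(-a) * ‖∑ j, Φ j‖ * 1 := by rw [mul_one]; gcongr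
      _ ≤ _ := by gcongr


lemma hz_Gamma_bound : ∃ C, ∀ s : ℂ, (1/2:ℝ) ≤ s.re → s.re ≤ 3 → ‖Complex.Gamma s‖ ≤ C := by
  have hc : ∀ a : ℝ, 0 < a → MellinConvergent (fun x : ℝ => ((Real.exp (-x) : ℝ) : ℂ)) a := by
    intro a ha
    have := Complex.GammaIntegral_convergent (s := a) (by simpa using ha)
    unfold MellinConvergent
    refine this.congr_fun (fun x _ => ?_) measurableSet_Ioi
    simp [mul_comm]
  obtain ⟨C, hC⟩ := hz_mellin_strip_bound (fun x : ℝ => ((Real.exp (-x) : ℝ) : ℂ)) (1/2) 3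
    (hc _ (by norm_num)) (hc _ (by norm_num))
  refine ⟨C, fun s h1 h2 => ?_⟩
  rw [Complex.Gamma_eq_integral (by linarith), Complex.GammaIntegral_eq_mellin]
  exact hC s h1 h2

lemma hz_norm_sin_le (w : ℂ) : ‖Complex.sin w‖ ≤ Real.exp ‖w‖ := by
  have h1 : ‖Complex.exp (-w * Complex.I)‖ ≤ Real.exp ‖w‖ := by
    refine (Complex.norm_exp_le_exp_norm _).trans ?_
    simp
  have h2 : ‖Complex.exp (w * Complex.I)‖ ≤ Real.exp ‖w‖ := by
    refine (Complex.norm_exp_le_exp_norm _).trans ?_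
    simp
  rw [Complex.sin, norm_div, norm_mul]
  simp only [Complex.norm_I, mul_one, RCLike.norm_ofNat]
  have := norm_sub_le (Complex.exp (-w * Complex.I)) (Complex.exp (w * Complex.I))
  linarith

lemma hz_Gammainv_bound : ∃ C, ∀ z : ℂ, (-(1/4):ℝ) ≤ z.re → z.re ≤ 3/2 → 2 ≤ ‖z‖ →
    ‖(Complex.Gamma z)⁻¹‖ ≤ C * Real.exp (Real.pi * ‖z‖) := by
  obtain ⟨C, hC⟩ := hz_Gamma_bound
  refine ⟨C, fun z h1 h2 h3 => ?_⟩
  have him : z.im ≠ 0 := by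
    intro h
    have := Complex.norm_le_abs_re_add_abs_im z
    rw [h] at this
    have h4 : |z.re| ≤ 3/2 := abs_le.2 ⟨by linarith, h2⟩
    simp at this; linarith
  have hz1 : (1 - z) ≠ 0 := by
    intro h; apply him; have := congrArg Complex.im h; simpa using this
  have hsin : Complex.sin (Real.pi * z) ≠ 0 := by
    rw [Complex.sin_ne_zero_iff]
    intro k h
    have := congrArg Complex.im h
    simp at this
    exact him this
  have h5 := Complex.Gamma_mul_Gamma_one_sub z
  have h6 : Complex.Gamma (1 - z + 1) = (1 - z) * Complex.Gamma (1 - z) := Complex.Gamma_add_one _ hz1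
  have hpi : (Real.pi : ℂ) ≠ 0 := by exact_mod_cast Real.pi_ne_zero
  have h7 : (Complex.Gamma z)⁻¹ = Complex.Gamma (1 - z + 1) / (1 - z) * Complex.sin (Real.pi * z) / Real.pi := by
    rw [h6]
    apply inv_eq_of_mul_eq_one_right
    have : Complex.Gamma z * (Complex.Gamma (1 - z)  * Complex.sin (Real.pi * z) / Real.pi) = 1 := by
      rw [show Complex.Gamma z * (Complex.Gamma (1 - z)  * Complex.sin (Real.pi * z) / Real.pi) =
        (Complex.Gamma z * Complex.Gamma (1 - z)) * Complex.sin (Real.pi * z) / Real.pi by ring, h5]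
      field_simp
    rw [mul_div_cancel_left₀ _ hz1]
    exact this
  rw [h7, norm_div, norm_mul, norm_div]
  have h8 : ‖Complex.Gamma (1 - z + 1)‖ ≤ C := hC _ (by simp; linarith) (by simp; linarith)
  have h9 : 1 ≤ ‖1 - z‖ := by
    have := norm_sub_norm_le z 1
    rw [norm_sub_rev]; simp at this; linarith
  have h10 := hz_norm_sin_le (Real.pi * z)
  have h11 : ‖(Real.pi : ℂ) * z‖ = Real.pi * ‖z‖ := by
    rw [norm_mul]; simp [abs_of_pos Real.pi_pos]
  rw [h11] at h10
  have h12 : 1 ≤ ‖(Real.pi : ℂ)‖ := by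
    simp [abs_of_pos Real.pi_pos]; linarith [Real.pi_gt_three]
  have h13 : ‖Complex.Gamma (1 - z + 1)‖ / ‖1 - z‖ ≤ C :=
    (div_le_self (norm_nonneg _) h9).trans h8
  have hC0 : 0 ≤ C := (norm_nonneg _).trans h8
  calc _ ≤ ‖Complex.Gamma (1 - z + 1)‖ / ‖1 - z‖ * ‖Complex.sin (Real.pi * z)‖ :=
        div_le_self (by positivity) h12
    _ ≤ _ := by gcongr

lemma hz_Gammareal_bound : ∃ C, ∀ s : ℂ, (-(1/2):ℝ) ≤ s.re → s.re ≤ 3 → 4 ≤ ‖s‖ →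
    ‖(Complex.Gammaℝ s)⁻¹‖ ≤ C * Real.exp (Real.pi * ‖s‖) := by
  obtain ⟨C, hC⟩ := hz_Gammainv_bound
  refine ⟨(Real.pi ^ (3/2:ℝ)) * C, fun s h1 h2 h3 => ?_⟩
  have hn : ‖s / 2‖ = ‖s‖ / 2 := by simp
  have h4 := hC (s/2) (by simp; linarith) (by simp; linarith) (by rw [hn]; linarith)
  rw [Complex.Gammaℝ_def, mul_inv, norm_mul, norm_inv, Complex.norm_cpow_eq_rpow_re_of_pos Real.pi_pos,
    ← Real.rpow_neg Real.pi_pos.le]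
  have h5 : Real.pi ^ (-(-s/2).re) ≤ Real.pi ^ (3/2:ℝ) := by
    apply Real.rpow_le_rpow_of_exponent_le (by linarith [Real.pi_gt_three])
    simp; linarith
  have hC0 : 0 ≤ C := by
    have := (norm_nonneg _).trans h4
    exact nonneg_of_mul_nonneg_left this (Real.exp_pos _)
  calc _ ≤ Real.pi ^ (3/2:ℝ) * (C * Real.exp (Real.pi * ‖s/2‖)) := by gcongr
    _ ≤ Real.pi ^ (3/2:ℝ) * (C * Real.exp (Real.pi * ‖s‖)) := by
      gcongr; rw [hn]; linarith [norm_nonneg s]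
    _ = _ := by ring

lemma hz_L_growth {N : ℕ} [NeZero N] (χ : DirichletCharacter ℂ N) :
    ∃ C, 0 ≤ C ∧ ∀ s : ℂ, (-(1/2):ℝ) ≤ s.re → s.re ≤ 2 → 5 ≤ ‖s‖ →
    ‖χ.LFunction s‖ ≤ C * Real.exp (2 * Real.pi * ‖s‖) := by
  obtain ⟨C1, hC1⟩ := hz_completed_bound (N := N) χ (-(1/2)) 2
  obtain ⟨C2, hC2⟩ := hz_Gammareal_bound
  have key : ∀ s : ℂ, (-(1/2):ℝ) ≤ s.re → s.re ≤ 2 → 5 ≤ ‖s‖ →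
    ‖χ.LFunction s‖ ≤ |C1| * |C2| * Real.exp (2 * Real.pi * ‖s‖) := by
    intro s h1 h2 h3
    have hs0 : s ≠ 0 := by rintro rfl; simp at h3; linarith
    rw [DirichletCharacter.LFunction_eq_completed_div_gammaFactor χ s (Or.inl hs0), div_eq_mul_inv,
      norm_mul]
    have h4 := (hC1 s h1 h2 (by linarith)).trans (le_abs_self _)
    have h5 : ‖(χ.gammaFactor s)⁻¹‖ ≤ |C2| * Real.exp (2 * Real.pi * ‖s‖) := by
      rcases χ.even_or_odd with h | h
      · rw [h.gammaFactor_def]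
        refine (hC2 s h1 (by linarith) (by linarith)).trans ?_
        gcongr
        · exact le_abs_self _
        · linarith [Real.pi_pos]
      · rw [h.gammaFactor_def]
        have h6 : ‖s + 1‖ ≤ ‖s‖ + 1 := by simpa using norm_add_le s 1
        have h7 : ‖s‖ - 1 ≤ ‖s + 1‖ := by simpa using norm_sub_norm_le s (-1)
        refine (hC2 (s+1) (by simp; linarith) (by simp; linarith) (by linarith)).trans ?_
        refine mul_le_mul (le_abs_self _) (Real.exp_le_exp.2 ?_) (Real.exp_pos _).le (abs_nonneg _)
        nlinarith [Real.pi_pos]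
    rw [mul_assoc]
    exact mul_le_mul h4 h5 (norm_nonneg _) (abs_nonneg _)
  exact ⟨_, by positivity, key⟩


lemma hz_LSeries_le (f : ℕ → ℂ) (hf : ∀ n, ‖f n‖ ≤ 1) (k A : ℝ)
    (hA : HasSum (fun n : ℕ => 1 / (n:ℝ) ^ k) A) (s : ℂ) (hs : k ≤ s.re) :
    ‖LSeries f s‖ ≤ A := by
  refine tsum_of_norm_bounded hA fun n => ?_
  rw [LSeries.norm_term_eq]
  split_ifs with h
  · positivity
  · have hn : (1:ℝ) ≤ n := by exact_mod_cast Nat.one_le_iff_ne_zero.2 h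
    exact div_le_div₀ (by norm_num) (hf n) (by positivity)
      (Real.rpow_le_rpow_of_exponent_le hn hs)

lemma hz_L_le {N : ℕ} [NeZero N] (χ : DirichletCharacter ℂ N) (k A : ℝ) (hk : 1 < k)
    (hA : HasSum (fun n : ℕ => 1 / (n:ℝ) ^ k) A) (s : ℂ) (hs : k ≤ s.re) :
    ‖χ.LFunction s‖ ≤ A := by
  rw [DirichletCharacter.LFunction_eq_LSeries χ (by linarith)]
  exact hz_LSeries_le _ (fun n => χ.norm_le_one n) k A hA s hs

lemma hz_L_ne {N : ℕ} [NeZero N] (χ : DirichletCharacter ℂ N) (s : ℂ) (hs : 1 < s.re) :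
    χ.LFunction s ≠ 0 := by
  rw [DirichletCharacter.LFunction_eq_LSeries χ hs]
  exact DirichletCharacter.LSeries_ne_zero_of_one_lt_re χ hs

lemma hz_Linv_le {N : ℕ} [NeZero N] (χ : DirichletCharacter ℂ N) (k A : ℝ) (hk : 1 < k)
    (hA : HasSum (fun n : ℕ => 1 / (n:ℝ) ^ k) A) (s : ℂ) (hs : k ≤ s.re) :
    ‖(χ.LFunction s)⁻¹‖ ≤ A := by
  have h1 := DirichletCharacter.LSeries.mul_mu_eq_one χ (s := s) (by linarith)
  rw [DirichletCharacter.LFunction_eq_LSeries χ (by linarith), inv_eq_of_mul_eq_one_right h1]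
  refine hz_LSeries_le _ (fun n => ?_) k A hA s hs
  rw [Pi.mul_apply, norm_mul]
  refine mul_le_one₀ (χ.norm_le_one _) (norm_nonneg _) ?_
  rw [Complex.norm_intCast]
  exact_mod_cast ArithmeticFunction.abs_moebius_le_one

lemma hz_L_conj {N : ℕ} [NeZero N] (χ : DirichletCharacter ℂ N) (s : ℂ) (hs : 1 < s.re) :
    ‖χ⁻¹.LFunction ((starRingEnd ℂ) s)‖ = ‖χ.LFunction s‖ := by
  rw [DirichletCharacter.LFunction_eq_LSeries χ hs,
    DirichletCharacter.LFunction_eq_LSeries χ⁻¹ (by simpa using hs)]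
  rw [← Complex.norm_conj (LSeries _ s)]
  congr 1
  unfold LSeries
  rw [Complex.conj_tsum]
  refine tsum_congr fun n => ?_
  rw [LSeries.term_def, LSeries.term_def]
  split_ifs with h
  · simp
  · rw [map_div₀, ← MulChar.star_apply', RCLike.star_def]
    congr 1
    rw [Complex.cpow_conj _ _ (by rw [Complex.natCast_arg]; exact Real.pi_pos.ne)]; simp

lemma hz_gaussSum_inv {N : ℕ} [NeZero N] (χ : DirichletCharacter ℂ N) :
    ‖gaussSum χ⁻¹ (ZMod.stdAddChar (N := N))‖ = ‖gaussSum χ (ZMod.stdAddChar (N := N))‖ := by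
  have h1 := star_gaussSum_eq χ (ZMod.stdAddChar (N := N))
  have h2 : (ZMod.stdAddChar (N := N))⁻¹ = (ZMod.stdAddChar (N := N)).mulShift ((-1 : (ZMod N)ˣ) : ZMod N) := by
    rw [AddChar.inv_mulShift]; simp
  rw [h2, gaussSum_mulShift_eq] at h1
  have h3 := congrArg norm h1
  rw [norm_mul, inv_inv, DirichletCharacter.unit_norm_eq_one, one_mul] at h3
  rw [← h3, norm_star]

lemma hz_root_inv {N : ℕ} [NeZero N] (χ : DirichletCharacter ℂ N) :
    ‖χ⁻¹.rootNumber‖ = ‖χ.rootNumber‖ := by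
  unfold DirichletCharacter.rootNumber
  simp only [norm_div, norm_pow, Complex.norm_I, one_pow, hz_gaussSum_inv]

lemma hz_gamma_ne {N : ℕ} (χ : DirichletCharacter ℂ N) (s : ℂ) (hs : 0 < s.re) :
    χ.gammaFactor s ≠ 0 := by
  unfold DirichletCharacter.gammaFactor
  split_ifs
  · exact Complex.Gammaℝ_ne_zero_of_re_pos hs
  · exact Complex.Gammaℝ_ne_zero_of_re_pos (by simp; linarith)

lemma hz_completed_eq {N : ℕ} [NeZero N] (χ : DirichletCharacter ℂ N) (s : ℂ) (hs : 0 < s.re) :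
    χ.completedLFunction s = χ.LFunction s * χ.gammaFactor s := by
  rw [DirichletCharacter.LFunction_eq_completed_div_gammaFactor χ s
    (Or.inl (by rintro rfl; simp at hs)), div_mul_cancel₀ _ (hz_gamma_ne χ s hs)]

lemma hz_root_norm {N : ℕ} [NeZero N] (χ : DirichletCharacter ℂ N) (hχ : χ.IsPrimitive) :
    ‖χ.rootNumber‖ = 1 := by
  have hχ' : χ⁻¹.IsPrimitive := by
    rw [DirichletCharacter.isPrimitive_def, DirichletCharacter.conductor_inv]; exact hχ
  have h1 := hχ.completedLFunction_one_sub (1 - 2)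
  have h2 := hχ'.completedLFunction_one_sub 2
  rw [inv_inv] at h2
  rw [sub_sub_cancel] at h1
  have h3 : χ.completedLFunction 2 ≠ 0 := by
    rw [hz_completed_eq χ 2 (by simp)]
    exact mul_ne_zero (hz_L_ne χ 2 (by simp)) (hz_gamma_ne χ 2 (by simp))
  rw [h2] at h1
  have hN : (N:ℂ) ≠ 0 := by exact_mod_cast NeZero.ne N
  have h4 : (N:ℂ) ^ ((1:ℂ) - 2 - 1/2) * (N:ℂ) ^ ((2:ℂ) - 1/2) = 1 := by
    rw [← Complex.cpow_add _ _ hN]; norm_num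
  have h5 : χ.rootNumber * χ⁻¹.rootNumber = 1 := by
    apply mul_right_cancel₀ h3
    rw [one_mul]
    conv_rhs => rw [h1]
    linear_combination (-(χ.rootNumber * χ⁻¹.rootNumber * χ.completedLFunction 2)) * h4
  have h6 := congrArg norm h5
  rw [norm_mul, hz_root_inv, norm_one] at h6
  nlinarith [norm_nonneg χ.rootNumber]

lemma hz_Gammareal_conj (s : ℂ) : ‖Complex.Gammaℝ ((starRingEnd ℂ) s)‖ = ‖Complex.Gammaℝ s‖ := by
  rw [Complex.Gammaℝ_def, Complex.Gammaℝ_def, norm_mul, norm_mul]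
  congr 1
  · rw [Complex.norm_cpow_eq_rpow_re_of_pos Real.pi_pos, Complex.norm_cpow_eq_rpow_re_of_pos Real.pi_pos]
    simp
  · rw [show (starRingEnd ℂ) s / 2 = (starRingEnd ℂ) (s / 2) by simp [map_ofNat], Complex.Gamma_conj, Complex.norm_conj]

lemma hz_boundary {N : ℕ} [NeZero N] (χ : DirichletCharacter ℂ N) (hχ : χ.IsPrimitive) (w : ℂ)
    (hw : w.re = -(1/2)) :
    ‖χ.LFunction w‖ = N * ‖χ.LFunction (w + 2)‖ * ‖w + 1‖ / (2 * Real.pi) := by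
  have hw0 : w ≠ 0 := by rintro rfl; norm_num at hw
  have hc : 1 - w = (starRingEnd ℂ) (w + 2) := by
    apply Complex.ext
    · simp [hw]; norm_num
    · simp
  have h1 := hχ.completedLFunction_one_sub (1 - w)
  rw [sub_sub_cancel] at h1
  have h2 : ‖χ.completedLFunction w‖ = N * ‖χ⁻¹.completedLFunction (1 - w)‖ := by
    rw [h1, norm_mul, norm_mul, hz_root_norm χ hχ, Complex.norm_natCast_cpow_of_pos (NeZero.pos N)]
    norm_num [hw]
  rw [hz_completed_eq χ⁻¹ (1 - w) (by simp [hw]; norm_num), norm_mul] at h2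
  have h3 : ‖χ⁻¹.LFunction (1 - w)‖ = ‖χ.LFunction (w+2)‖ := by
    rw [hc, hz_L_conj χ (w+2) (by simp [hw]; norm_num)]
  rw [h3] at h2
  have hww : ‖w‖ = ‖w + 1‖ := by
    rw [Complex.norm_eq_sqrt_sq_add_sq, Complex.norm_eq_sqrt_sq_add_sq]
    simp [hw]; norm_num
  rw [DirichletCharacter.LFunction_eq_completed_div_gammaFactor χ w (Or.inl hw0), norm_div, h2]
  have hpi : ‖(Real.pi : ℂ)‖ = Real.pi := by simp [abs_of_pos Real.pi_pos]
  rcases χ.even_or_odd with h | h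
  · have h' : χ⁻¹.Even := by
      unfold DirichletCharacter.Even at *
      rw [MulChar.inv_apply_eq_inv, h]; simp
    rw [h.gammaFactor_def, h'.gammaFactor_def, hc, hz_Gammareal_conj, Complex.Gammaℝ_add_two hw0]
    have : Complex.Gammaℝ w ≠ 0 := by
      intro h0
      obtain ⟨n, hn⟩ := Complex.Gammaℝ_eq_zero_iff.1 h0
      have := congrArg Complex.re hn
      simp [hw] at this
      have h9 : (4 * n : ℝ) = 1 := by linarith
      have h10 : 4 * n = 1 := by exact_mod_cast h9
      omega
    rw [norm_div, norm_div, norm_mul, hpi, ← hww]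
    have := norm_ne_zero_iff.2 this
    simp only [RCLike.norm_ofNat]
    field_simp
  · have h' : χ⁻¹.Odd := by
      unfold DirichletCharacter.Odd at *
      rw [MulChar.inv_apply_eq_inv, h]; simp [Ring.inverse_eq_inv']
    have hw1 : w + 1 ≠ 0 := by intro h; have := congrArg Complex.re h; norm_num [hw] at this
    rw [h.gammaFactor_def, h'.gammaFactor_def, hc,
      show (starRingEnd ℂ) (w + 2) + 1 = (starRingEnd ℂ) (w + 1 + 2) by simp; ring, hz_Gammareal_conj, Complex.Gammaℝ_add_two hw1]
    have : Complex.Gammaℝ (w+1) ≠ 0 := Complex.Gammaℝ_ne_zero_of_re_pos (by simp [hw]; norm_num)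
    rw [norm_div, norm_div, norm_mul, hpi]
    have := norm_ne_zero_iff.2 this
    simp only [RCLike.norm_ofNat]
    field_simp


lemma hz_L1 {N : ℕ} [NeZero N] (χ : DirichletCharacter ℂ N) :
    ∃ L1 : ℂ → ℂ, Differentiable ℂ L1 ∧ ∀ s, s ≠ 1 → L1 s = (s - 1) * χ.LFunction s := by
  by_cases h : χ = 1
  · subst h
    refine ⟨DirichletCharacter.LFunctionTrivChar₁ N,
      DirichletCharacter.differentiable_LFunctionTrivChar₁ N, fun s hs => ?_⟩
    simp [DirichletCharacter.LFunctionTrivChar₁, hs]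
  · exact ⟨fun s => (s - 1) * χ.LFunction s,
      (by fun_prop : Differentiable ℂ fun s : ℂ => s - 1).mul (DirichletCharacter.differentiable_LFunction h),
      fun s _ => rfl⟩

lemma hz_norm_sub_le (w : ℂ) (hw : -(1/2) ≤ w.re) : ‖w - 1‖ ≤ ‖w + 2‖ := by
  rw [Complex.norm_eq_sqrt_sq_add_sq, Complex.norm_eq_sqrt_sq_add_sq]
  apply Real.sqrt_le_sqrt
  simp; nlinarith

lemma hz_blaschke_L {N : ℕ} [NeZero N] (χ : DirichletCharacter ℂ N) (hχ : χ.IsPrimitive)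
    (S : Finset ℂ) (hS : ∀ ρ ∈ S, χ.LFunction ρ = 0 ∧ 0 < ρ.re ∧ ρ.re < 1) (w : ℂ) (hw : 2 ≤ w.re) :
    2 * Real.pi * ‖w - 1‖ * ‖χ.LFunction w‖ / (N * ‖w + 1‖ * ‖w + 2‖ * ‖χ.LFunction (w + 2)‖)
      ≤ ∏ ρ ∈ S, ‖(w - ρ) / (w + 1 + (starRingEnd ℂ) ρ)‖ := by
  classical
  obtain ⟨L1, hL1d, hL1⟩ := hz_L1 χ
  have hL1n : ∀ v : ℂ, v ≠ 1 → ‖L1 v‖ = ‖v - 1‖ * ‖χ.LFunction v‖ := fun v hv => by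
    rw [hL1 v hv, norm_mul]
  have hN1 : (1:ℝ) ≤ N := by exact_mod_cast NeZero.one_le
  set Q : ℂ → ℂ := fun v => 2 * Real.pi * L1 v / (N * (v + 1) * (v + 2) * χ.LFunction (v + 2)) with hQ
  have hQn : ∀ v : ℂ, v ≠ 1 → ‖Q v‖ = 2 * Real.pi * ‖v - 1‖ * ‖χ.LFunction v‖ /
      (N * ‖v + 1‖ * ‖v + 2‖ * ‖χ.LFunction (v + 2)‖) := by
    intro v hv
    simp only [hQ, norm_div, norm_mul, hL1n v hv, RCLike.norm_ofNat, Complex.norm_natCast,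
      Complex.norm_real, Real.norm_eq_abs, abs_of_pos Real.pi_pos]
    ring
  set F : ℂ → ℂ := fun z => Q (z - 1/2) with hF
  have hv1 : ∀ v : ℂ, -(1/2) ≤ v.re → v + 1 ≠ 0 := by
    intro v hv h; have := congrArg Complex.re h; simp at this; linarith
  have hv2 : ∀ v : ℂ, -(1/2) ≤ v.re → v + 2 ≠ 0 := by
    intro v hv h; have := congrArg Complex.re h; simp at this; linarith
  have hv3 : ∀ v : ℂ, -(1/2) ≤ v.re → χ.LFunction (v + 2) ≠ 0 := by
    intro v hv; exact hz_L_ne χ _ (by simp; linarith)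
  have hNC : (N:ℂ) ≠ 0 := by exact_mod_cast NeZero.ne N
  have hQd : ∀ v : ℂ, -(1/2) ≤ v.re → DifferentiableAt ℂ Q v := by
    intro v hv
    have h1 : DifferentiableAt ℂ (fun v => χ.LFunction (v + 2)) v := by
      have := DirichletCharacter.differentiableAt_LFunction χ (v+2) (Or.inl (by
        intro h; have := congrArg Complex.re h; simp at this; linarith))
      exact this.comp v (by fun_prop)
    refine DifferentiableAt.div ?_ ?_ ?_
    · exact (differentiableAt_const _).mul (hL1d v)
    · exact DifferentiableAt.mul (by fun_prop) h1
    · exact mul_ne_zero (mul_ne_zero (mul_ne_zero hNC (hv1 v hv)) (hv2 v hv)) (hv3 v hv)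
  have hFd : DiffContOnCl ℂ F {z | 0 < z.re} := by
    apply DifferentiableOn.diffContOnCl
    rw [Complex.closure_setOfPred_lt_re]
    intro z (hz : 0 ≤ z.re)
    apply DifferentiableAt.differentiableWithinAt
    have := hQd (z - 1/2) (by simp; linarith)
    exact DifferentiableAt.comp (g := Q) (f := fun z : ℂ => z - 1/2) z this (by fun_prop)
  have hsumm : Summable (fun n : ℕ => 1 / (n:ℝ) ^ (3/2:ℝ)) :=
    Real.summable_one_div_nat_rpow.2 (by norm_num)
  obtain ⟨A, hA⟩ := hsumm
  obtain ⟨C, hC0, hC⟩ := hz_L_growth χ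
  have hA0 : 0 ≤ A := (norm_nonneg _).trans (hz_L_le χ _ A (by norm_num) hA 2 (by norm_num))
  have hQb : ∀ v : ℂ, -(1/2) ≤ v.re → v ≠ 1 → ‖Q v‖ ≤ 4 * Real.pi * A * ‖χ.LFunction v‖ := by
    intro v hv hv'
    rw [hQn v hv']
    have h1 : 1/2 ≤ ‖v + 1‖ := by
      have := Complex.re_le_norm (v+1); simp at this; linarith
    have h2 := hz_norm_sub_le v hv
    have h3 := hz_Linv_le χ _ A (by norm_num) hA (v+2) (by simp; linarith)
    have h4 : 0 < ‖χ.LFunction (v + 2)‖ := norm_pos_iff.2 (hv3 v hv)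
    have h5 : 0 < ‖v + 2‖ := norm_pos_iff.2 (hv2 v hv)
    rw [norm_inv, inv_le_iff_one_le_mul₀ h4] at h3
    rw [div_le_iff₀ (by positivity)]
    have h6 : ‖v - 1‖ ≤ 2 * (N * ‖v + 1‖ * ‖v + 2‖ * (A * ‖χ.LFunction (v + 2)‖)) := by
      calc ‖v - 1‖ ≤ ‖v + 2‖ := h2
        _ = 2 * (1 * (1/2) * ‖v+2‖ * 1) := by ring
        _ ≤ _ := by gcongr
    calc _ = 2 * Real.pi * ‖χ.LFunction v‖ * ‖v - 1‖ := by ring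
      _ ≤ 2 * Real.pi * ‖χ.LFunction v‖ *
          (2 * (N * ‖v + 1‖ * ‖v + 2‖ * (A * ‖χ.LFunction (v + 2)‖))) := by gcongr
      _ = _ := by ring
  have hFim : ∀ x : ℝ, ‖F (x * Complex.I)‖ ≤ 1 := by
    intro x
    set v : ℂ := x * Complex.I - 1/2 with hv
    have hre : v.re = -(1/2) := by simp [hv]
    have hv' : v ≠ 1 := by intro h; rw [h] at hre; norm_num at hre
    have h0 : F (x * Complex.I) = Q v := rfl
    rw [h0, hQn v hv', hz_boundary χ hχ v hre]
    have h2 := hz_norm_sub_le v hre.ge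
    have h4 : 0 < ‖χ.LFunction (v + 2)‖ := norm_pos_iff.2 (hv3 v hre.ge)
    have h5 : 0 < ‖v + 2‖ := norm_pos_iff.2 (hv2 v hre.ge)
    have h6 : 0 < ‖v + 1‖ := norm_pos_iff.2 (hv1 v hre.ge)
    rw [div_le_one (by positivity)]
    have hpi := Real.pi_pos
    calc _ = N * ‖χ.LFunction (v + 2)‖ * ‖v + 1‖ * ‖v - 1‖ := by field_simp
      _ ≤ N * ‖χ.LFunction (v + 2)‖ * ‖v + 1‖ * ‖v + 2‖ := by gcongr
      _ = _ := by ring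
  have hFb : ∀ z : ℂ, 0 < z.re → ‖F z‖ ≤ 1 := by
    intro z hz
    refine PhragmenLindelof.right_half_plane_of_bounded_on_real hFd ?_ ?_ hFim hz.le
    · refine ⟨1, by norm_num, 2 * Real.pi, ?_⟩
      refine Asymptotics.IsBigO.of_bound (4 * Real.pi * A * (A + C * Real.exp (2 * Real.pi))) ?_
      rw [Filter.eventually_inf_principal]
      have : ∀ᶠ z in Bornology.cobounded ℂ, 6 < ‖z‖ :=
        tendsto_norm_cobounded_atTop.eventually (Filter.eventually_gt_atTop _)
      filter_upwards [this] with z h1 (h2 : 0 < z.re)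
      have hn1 : ‖z - 1/2‖ ≤ ‖z‖ + 1 := by
        have := norm_sub_le z (1/2); norm_num at this; linarith
      have hn2 : 5 ≤ ‖z - 1/2‖ := by
        have := norm_sub_norm_le z (1/2); norm_num at this; linarith
      have hne : z - 1/2 ≠ 1 := by intro h; rw [h] at hn2; norm_num at hn2
      have hre : -(1/2) ≤ (z - 1/2).re := by simp; linarith
      refine (hQb (z - 1/2) hre hne).trans ?_
      rw [Real.norm_eq_abs, abs_of_pos (Real.exp_pos _), Real.rpow_one, mul_assoc _ (_ + _)]
      have he : 1 ≤ Real.exp (2 * Real.pi * ‖z‖) := Real.one_le_exp (by positivity)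
      gcongr
      rcases le_total (z - 1/2).re 2 with h | h
      · refine (hC _ hre h hn2).trans ?_
        have : Real.exp (2 * Real.pi * ‖z - 1/2‖) ≤ Real.exp (2 * Real.pi) * Real.exp (2 * Real.pi * ‖z‖) := by
          rw [← Real.exp_add]; apply Real.exp_le_exp.2; nlinarith [Real.pi_pos]
        have h8 := mul_le_mul_of_nonneg_left this hC0
        have h9 := Real.exp_pos (2 * Real.pi * ‖z‖)
        nlinarith [mul_nonneg hA0 h9.le]
      · refine (hz_L_le χ _ A (by norm_num) hA _ (by linarith)).trans ?_
        have h9 := Real.exp_pos (2 * Real.pi)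
        nlinarith [mul_nonneg hC0 h9.le]
    · refine ⟨4 * Real.pi * A * A, ?_⟩
      rw [Filter.eventually_map]
      filter_upwards [Filter.eventually_gt_atTop (3:ℝ)] with x h1
      have hx : ((x:ℂ) - 1/2).re = x - 1/2 := by simp
      have hne : (x:ℂ) - 1/2 ≠ 1 := by
        intro h; have := congrArg Complex.re h; rw [hx] at this; norm_num at this; linarith
      refine (hQb (x - 1/2) (by rw [hx]; linarith) hne).trans ?_
      gcongr
      exact hz_L_le χ _ A (by norm_num) hA _ (by rw [hx]; linarith)
  have hw1 : w ≠ 1 := by rintro rfl; norm_num at hw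
  have main := halfplane_blaschke (S.image (fun ρ => ρ + 1/2)) F hFd hFb ?_ (w + 1/2) (by simp; linarith)
  · rw [Finset.prod_image (by intro a _ b _ h; simpa using h)] at main
    have h0 : F (w + 1/2) = Q w := by simp [hF]
    rw [h0, hQn w hw1] at main
    refine main.trans_eq (Finset.prod_congr rfl fun ρ _ => ?_)
    congr 1
    congr 1
    · ring
    · simp [map_ofNat]; ring
  · intro a ha
    obtain ⟨ρ, hρ, rfl⟩ := Finset.mem_image.1 ha
    obtain ⟨h1, h2, h3⟩ := hS ρ hρ
    refine ⟨by simp; linarith, ?_⟩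
    have hne : ρ ≠ 1 := by rintro rfl; norm_num at h3
    simp [hF, hQ, hL1 ρ hne, h1]

lemma hz_zero_sum {N : ℕ} [NeZero N] (χ : DirichletCharacter ℂ N) (hχ : χ.IsPrimitive)
    (S : Finset ℂ) (hS : ∀ ρ ∈ S, χ.LFunction ρ = 0 ∧ 0 < ρ.re ∧ ρ.re < 1) (w : ℂ) (hw : 2 ≤ w.re) :
    ∑ ρ ∈ S, Real.log (‖w + 1 + (starRingEnd ℂ) ρ‖ / ‖w - ρ‖) ≤
      Real.log (N * ‖w + 1‖ * ‖w + 2‖ * (Real.pi ^ 6 / 540) / (2 * Real.pi * ‖w - 1‖)) := by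
  have h1 := hz_blaschke_L χ hχ S hS w hw
  have hz4 : HasSum (fun n : ℕ => 1 / (n:ℝ) ^ (4:ℝ)) (Real.pi ^ 4 / 90) := by
    simpa using hasSum_zeta_four
  have hz2 : HasSum (fun n : ℕ => 1 / (n:ℝ) ^ (2:ℝ)) (Real.pi ^ 2 / 6) := by
    simpa using hasSum_zeta_two
  have hL2 := hz_Linv_le χ _ _ (by norm_num) hz2 w hw
  have hL4 := hz_L_le χ _ _ (by norm_num) hz4 (w+2) (by simp; linarith)
  have hp1 : 0 < ‖w + 1‖ := norm_pos_iff.2 (by intro h; have := congrArg Complex.re h; simp at this; linarith)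
  have hp2 : 0 < ‖w + 2‖ := norm_pos_iff.2 (by intro h; have := congrArg Complex.re h; simp at this; linarith)
  have hp3 : 0 < ‖w - 1‖ := norm_pos_iff.2 (by intro h; have := congrArg Complex.re h; simp at this; linarith)
  have hpL : 0 < ‖χ.LFunction w‖ := norm_pos_iff.2 (hz_L_ne χ w (by linarith))
  have hpL' : 0 < ‖χ.LFunction (w+2)‖ := norm_pos_iff.2 (hz_L_ne χ _ (by simp; linarith))
  have hpi := Real.pi_pos
  have hN0 : (0:ℝ) < N := by exact_mod_cast NeZero.pos N
  set B := N * ‖w + 1‖ * ‖w + 2‖ * (Real.pi ^ 6 / 540) / (2 * Real.pi * ‖w - 1‖) with hB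
  have hBpos : 0 < B := by positivity
  rw [norm_inv, inv_le_iff_one_le_mul₀ hpL] at hL2
  have h2 : B⁻¹ ≤ ∏ ρ ∈ S, ‖(w - ρ) / (w + 1 + (starRingEnd ℂ) ρ)‖ := by
    refine le_trans ?_ h1
    rw [hB, inv_div, div_le_div_iff₀ (by positivity) (by positivity)]
    have : ‖χ.LFunction (w+2)‖ ≤ Real.pi ^ 6 / 540 * ‖χ.LFunction w‖ := by
      calc _ ≤ Real.pi ^ 4 / 90 * 1 := by linarith
        _ ≤ Real.pi ^ 4 / 90 * (Real.pi ^ 2 / 6 * ‖χ.LFunction w‖) := by gcongr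
        _ = _ := by ring
    calc _ = (2 * Real.pi * ‖w - 1‖ * (N * ‖w + 1‖ * ‖w + 2‖)) * ‖χ.LFunction (w+2)‖ := by ring
      _ ≤ (2 * Real.pi * ‖w - 1‖ * (N * ‖w + 1‖ * ‖w + 2‖)) * (Real.pi ^ 6 / 540 * ‖χ.LFunction w‖) := by gcongr
      _ = _ := by ring
  have h3 := Real.log_le_log (by positivity) h2
  rw [Real.log_inv, Real.log_prod] at h3
  · rw [← neg_le_neg_iff, ← Finset.sum_neg_distrib]
    refine h3.trans_eq (Finset.sum_congr rfl fun ρ _ => ?_)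
    rw [norm_div, ← Real.log_inv, inv_div]
  · intro ρ hρ
    obtain ⟨_, h2, h3⟩ := hS ρ hρ
    rw [norm_ne_zero_iff]
    apply div_ne_zero
    · intro h; have := congrArg Complex.re h; simp at this; linarith
    · intro h; have := congrArg Complex.re h; simp at this; linarith


lemma hz_int_rpow_gauss (p m c : ℝ) (hp : -1 < p) (hc : 0 < c) :
    IntegrableOn (fun r : ℝ => r ^ p * Real.exp (m * r - c * r ^ 2)) (Ioi 0) := by
  have h1 := (integrableOn_rpow_mul_exp_neg_mul_sq (half_pos hc) hp).const_mul (Real.exp (m ^ 2 / (2 * c)))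
  refine Integrable.mono' h1 ?_ ?_
  · apply Measurable.aestronglyMeasurable; fun_prop
  · refine (ae_restrict_iff' measurableSet_Ioi).2 (.of_forall fun r (hr : 0 < r) => ?_)
    have h2 : 0 ≤ r ^ p := Real.rpow_nonneg hr.le _
    rw [Real.norm_eq_abs, abs_of_nonneg (by positivity)]
    rw [show Real.exp (m ^ 2 / (2 * c)) * (r ^ p * Real.exp (-(c/2) * r ^ 2)) =
      r ^ p * (Real.exp (m ^ 2 / (2 * c)) * Real.exp (-(c/2) * r ^ 2)) by ring, ← Real.exp_add]
    gcongr
    have : m ^ 2 / (2 * c) + -(c/2) * r ^ 2 - (m * r - c * r ^ 2) = (m - c * r) ^ 2 / (2 * c) := by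
      field_simp; ring
    have h3 : 0 ≤ (m - c * r) ^ 2 / (2 * c) := by positivity
    linarith

noncomputable def hzE (L : ℝ) (z : ℂ) (r : ℝ) : ℂ :=
  Complex.exp (-z ^ 2 * r ^ 2 / 2 + Complex.I * L * z * r)

lemma hzE_norm (L : ℝ) (z : ℂ) (r : ℝ) :
    ‖hzE L z r‖ = Real.exp (-(L * z.im) * r - ((z.re ^ 2 - z.im ^ 2) / 2) * r ^ 2) := by
  rw [hzE, Complex.norm_exp]
  congr 1
  simp [pow_two]
  ring

lemma hz_cpow_norm (s : ℂ) {r : ℝ} (hr : 0 < r) : ‖(r:ℂ) ^ (s + 1)‖ = r ^ (s.re + 1) := by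
  rw [Complex.norm_cpow_eq_rpow_re_of_pos hr]; simp

lemma hzE_int (L : ℝ) (s z : ℂ) (hs : 0 < s.re) (hz : 0 < z.re ^ 2 - z.im ^ 2) :
    IntegrableOn (fun r : ℝ => (r:ℂ) ^ (s + 1) * hzE L z r) (Ioi 0) := by
  have h1 := hz_int_rpow_gauss (s.re + 1) (-(L * z.im)) ((z.re ^ 2 - z.im ^ 2) / 2) (by linarith) (by linarith)
  refine Integrable.mono' h1 ?_ ?_
  · apply Measurable.aestronglyMeasurable; unfold hzE; fun_prop
  · refine (ae_restrict_iff' measurableSet_Ioi).2 (.of_forall fun r (hr : 0 < r) => ?_)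
    rw [norm_mul, hz_cpow_norm s hr, hzE_norm]

lemma hzE_diff (L : ℝ) (s z : ℂ) (hs : 0 < s.re) (hz : 0 < z.re ^ 2 - z.im ^ 2) :
    DifferentiableAt ℂ (fun z => ∫ r in Ioi (0:ℝ), (r:ℂ) ^ (s + 1) * hzE L z r) z := by
  set c := (z.re ^ 2 - z.im ^ 2) / 2 with hc
  have hc0 : 0 < c := by linarith
  set M := ‖z‖ + 1 with hM
  have hM0 : 0 < M := by positivity
  set V : Set ℂ := {v | c < v.re ^ 2 - v.im ^ 2 ∧ ‖v‖ < M} with hV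
  have hVo : IsOpen V := by
    apply IsOpen.inter
    · exact isOpen_lt (f := fun _ : ℂ => c) (g := fun v : ℂ => v.re ^ 2 - v.im ^ 2) (by fun_prop) (by fun_prop)
    · exact isOpen_lt (f := fun v : ℂ => ‖v‖) (g := fun _ : ℂ => M) (by fun_prop) (by fun_prop)
  have hzV : z ∈ V := ⟨by linarith, by rw [hM]; linarith⟩
  have hb1 := (hz_int_rpow_gauss (s.re + 3) (|L| * M) (c/2) (by linarith) (by linarith)).const_mul M
  have hb2 := (hz_int_rpow_gauss (s.re + 2) (|L| * M) (c/2) (by linarith) (by linarith)).const_mul |L|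
  have key := hasDerivAt_integral_of_dominated_loc_of_deriv_le (𝕜 := ℂ) (μ := volume.restrict (Ioi (0:ℝ)))
    (F := fun z r => (r:ℂ) ^ (s + 1) * hzE L z r)
    (F' := fun z r => (r:ℂ) ^ (s + 1) * (hzE L z r * (-z * r ^ 2 + Complex.I * L * r)))
    (x₀ := z) (hVo.mem_nhds hzV) ?_ (hzE_int L s z hs hz) ?_ ?_ (hb1.add hb2) ?_
  · exact key.2.differentiableAt
  · refine .of_forall fun v => ?_
    apply Measurable.aestronglyMeasurable; unfold hzE; fun_prop
  · apply Measurable.aestronglyMeasurable; unfold hzE; fun_prop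
  · refine (ae_restrict_iff' measurableSet_Ioi).2 (.of_forall fun r (hr : 0 < r) => ?_)
    rintro v ⟨hv1, hv2⟩
    rw [norm_mul, norm_mul, hz_cpow_norm s hr, hzE_norm]
    have h1 : ‖-v * (r:ℂ) ^ 2 + Complex.I * L * r‖ ≤ M * r ^ 2 + |L| * r := by
      refine (norm_add_le _ _).trans ?_
      simp only [norm_mul, norm_neg, norm_pow, Complex.norm_real, Real.norm_eq_abs, Complex.norm_I,
        one_mul, abs_of_pos hr]
      gcongr
    have h2 : Real.exp (-(L * v.im) * r - (v.re ^ 2 - v.im ^ 2) / 2 * r ^ 2) ≤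
        Real.exp (|L| * M * r - c / 2 * r ^ 2) := by
      apply Real.exp_le_exp.2
      have h3 : -(L * v.im) ≤ |L| * M := by
        refine (neg_le_abs _).trans ?_
        rw [abs_mul]
        have := Complex.abs_im_le_norm v
        gcongr
        linarith
      have h4 : c / 2 ≤ (v.re ^ 2 - v.im ^ 2) / 2 := by linarith
      have := mul_le_mul_of_nonneg_right h3 hr.le
      have := mul_le_mul_of_nonneg_right h4 (sq_nonneg r)
      linarith
    have h5 : 0 ≤ r ^ (s.re + 1) := Real.rpow_nonneg hr.le _
    have e3 : r ^ (s.re + 3) = r ^ (s.re + 1) * r ^ 2 := by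
      rw [← Real.rpow_two, ← Real.rpow_add hr]; ring_nf
    have e2 : r ^ (s.re + 2) = r ^ (s.re + 1) * r := by
      nth_rewrite 3 [← Real.rpow_one r]; rw [← Real.rpow_add hr]; ring_nf
    calc _ ≤ r ^ (s.re + 1) * (Real.exp (|L| * M * r - c / 2 * r ^ 2) * (M * r ^ 2 + |L| * r)) := by
          gcongr
      _ = _ := by rw [Pi.add_apply, e2, e3]; ring
  · refine (ae_restrict_iff' measurableSet_Ioi).2 (.of_forall fun r (hr : 0 < r) => ?_)
    intro v _
    refine HasDerivAt.const_mul _ ?_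
    unfold hzE
    refine HasDerivAt.cexp ?_
    have h1 : HasDerivAt (fun v : ℂ => -v ^ 2 * (r:ℂ) ^ 2 / 2 + Complex.I * L * v * r)
      (-(((2:ℕ):ℂ) * v ^ (2-1) * 1) * (r:ℂ) ^ 2 / 2 + Complex.I * L * 1 * r) v :=
      (((((hasDerivAt_id v).pow 2).neg).mul_const _).div_const 2).add
        (((hasDerivAt_id v).const_mul _).mul_const _)
    have h2 : -v * (r:ℂ) ^ 2 + Complex.I * L * r = -(((2:ℕ):ℂ) * v ^ (2-1) * 1) * (r:ℂ) ^ 2 / 2 + Complex.I * L * 1 * r := by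
      push_cast; ring
    rw [h2]; exact h1

lemma hz_Gdelta_eq (δ : ℝ) (s : ℂ) :
    Gdelta δ s = ∫ r in Ioi (0:ℝ), (r:ℂ) ^ (s + 1) * hzE (2 * Real.pi * δ) 1 r := by
  unfold Gdelta mellin
  refine setIntegral_congr_fun measurableSet_Ioi fun t (ht : 0 < t) => ?_
  have ht' : (t:ℂ) ≠ 0 := by exact_mod_cast ht.ne'
  simp only [smul_eq_mul, hzE, e2pi]
  have h1 : (t:ℂ) ^ (s + 1) = (t:ℂ) ^ (s - 1) * (t:ℂ) ^ 2 := by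
    rw [show s + 1 = (s - 1) + ((2:ℕ):ℂ) by push_cast; ring, Complex.cpow_add _ _ ht', Complex.cpow_natCast]
  rw [h1]
  push_cast
  rw [show -(1:ℂ) ^ 2 * (t:ℂ) ^ 2 / 2 + Complex.I * (2 * Real.pi * δ) * 1 * t =
    -(t:ℂ) ^ 2 / 2 + 2 * Real.pi * Complex.I * (δ * t) by ring, Complex.exp_add]
  ring

lemma hz_rot (δ : ℝ) (s z : ℂ) (hs : 0 < s.re) (hz : |z.im| < z.re) :
    Gdelta δ s = z ^ (s + 2) * ∫ r in Ioi (0:ℝ), (r:ℂ) ^ (s + 1) * hzE (2 * Real.pi * δ) z r := by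
  set L := 2 * Real.pi * δ with hL
  set U : Set ℂ := {z | |z.im| < z.re} with hU
  have hUo : IsOpen U := isOpen_lt (by fun_prop) (by fun_prop)
  have hUc : Convex ℝ U := by
    intro x hx y hy a b ha hb hab
    simp only [hU, mem_ofPred_eq] at *
    simp only [Complex.add_im, Complex.add_re, Complex.real_smul, Complex.mul_re, Complex.mul_im,
      Complex.ofReal_re, Complex.ofReal_im, zero_mul, sub_zero, add_zero]
    rw [abs_lt] at *
    rcases eq_or_lt_of_le ha with h | h
    · subst h; have : b = 1 := by linarith
      subst this; constructor <;> simp <;> linarith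
    · constructor <;> nlinarith
  set I : ℂ → ℂ := fun z => ∫ r in Ioi (0:ℝ), (r:ℂ) ^ (s + 1) * hzE L z r with hI
  have hpos : ∀ v ∈ U, 0 < v.re ^ 2 - v.im ^ 2 := by
    intro v (hv : |v.im| < v.re)
    rw [abs_lt] at hv; nlinarith
  have hd : DifferentiableOn ℂ (fun z => z ^ (s + 2) * I z) U := by
    intro v hv
    apply DifferentiableAt.differentiableWithinAt
    refine DifferentiableAt.mul ?_ (hzE_diff L s v hs (hpos v hv))
    refine DifferentiableAt.cpow (by fun_prop) (by fun_prop) ?_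
    left
    have : |v.im| < v.re := hv
    exact (abs_nonneg _).trans_lt this
  have hreal : ∀ x : ℝ, 0 < x → (x:ℂ) ^ (s + 2) * I x = I 1 := by
    intro x hx
    have h1 := mellin_comp_mul_left (fun r => hzE L 1 r) (s + 2) hx
    have h2 : mellin (fun t => hzE L 1 (x * t)) (s + 2) = I x := by
      unfold mellin
      simp only [hI, smul_eq_mul]
      refine setIntegral_congr_fun measurableSet_Ioi fun t _ => ?_
      simp only [hzE]
      congr 2
      · ring
      · push_cast; ring
    have h3 : mellin (fun r => hzE L 1 r) (s + 2) = I 1 := by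
      unfold mellin
      simp only [hI, smul_eq_mul]
      refine setIntegral_congr_fun measurableSet_Ioi fun t _ => ?_
      congr 2
      ring
    have hx' : (x:ℂ) ≠ 0 := by exact_mod_cast hx.ne'
    rw [h2, h3, smul_eq_mul, Complex.cpow_neg] at h1
    rw [h1, mul_inv_cancel_left₀]
    rw [Complex.cpow_ne_zero_iff]; exact Or.inl hx'
  have h1U : (1:ℂ) ∈ U := by simp [hU]
  have hfreq : ∃ᶠ z in nhdsWithin (1:ℂ) {1}ᶜ, z ^ (s + 2) * I z = I 1 := by
    have ht : Filter.Tendsto (fun x : ℝ => (x:ℂ)) (nhdsWithin 1 {1}ᶜ) (nhdsWithin (1:ℂ) {1}ᶜ) := by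
      apply tendsto_nhdsWithin_of_tendsto_nhds_of_eventually_within
      · exact (Complex.continuous_ofReal.tendsto' 1 1 (by simp)).mono_left nhdsWithin_le_nhds
      · filter_upwards [self_mem_nhdsWithin] with x hx
        simpa using hx
    refine ht.frequently (Filter.Eventually.frequently ?_)
    have : ∀ᶠ x : ℝ in nhds 1, 0 < x := lt_mem_nhds (by norm_num)
    filter_upwards [nhdsWithin_le_nhds this] with x hx
    exact hreal x hx
  have := (hd.analyticOnNhd hUo).eqOn_of_preconnected_of_frequently_eq
    (g := fun _ => I 1) analyticOnNhd_const hUc.isPreconnected h1U hfreq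
  rw [hz_Gdelta_eq]
  exact (this hz).symm

lemma hz_Gdelta_bound (δ : ℝ) (s : ℂ) (hs : 0 < s.re) (φ : ℝ) (hφ1 : |φ| ≤ 1) (hφ : |Real.sin φ| < Real.cos φ) :
    ‖Gdelta δ s‖ ≤ Real.exp (-(φ * s.im)) * ∫ r in Ioi (0:ℝ), r ^ (s.re + 1) *
      Real.exp (-(2 * Real.pi * δ * Real.sin φ) * r - (Real.cos (2 * φ) / 2) * r ^ 2) := by
  set z : ℂ := Complex.exp (φ * Complex.I) with hz
  have hre : z.re = Real.cos φ := by rw [hz, Complex.exp_ofReal_mul_I_re]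
  have him : z.im = Real.sin φ := by rw [hz, Complex.exp_ofReal_mul_I_im]
  have hn : ‖z‖ = 1 := Complex.norm_exp_ofReal_mul_I φ
  have harg : z.arg = φ := by
    rw [hz, Complex.exp_mul_I]
    apply Complex.arg_cos_add_sin_mul_I
    rw [abs_le] at hφ1
    have := Real.pi_gt_three
    constructor <;> linarith
  rw [hz_rot δ s z hs (by rw [hre, him]; exact hφ), norm_mul]
  have h1 : ‖z ^ (s + 2)‖ = Real.exp (-(φ * s.im)) := by
    rw [Complex.norm_cpow_of_ne_zero (Complex.exp_ne_zero _), hn, harg, Real.one_rpow, Real.exp_neg]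
    simp
  rw [h1]
  gcongr
  refine (norm_integral_le_integral_norm _).trans_eq ?_
  refine setIntegral_congr_fun measurableSet_Ioi fun r (hr : 0 < r) => ?_
  simp only [norm_mul, hz_cpow_norm s hr, hzE_norm, hre, him, Real.cos_two_mul']


lemma hz_exp_quad (v : ℝ) (hv : 0 ≤ v) : 1 + 1.5 * v ^ 2 ≤ Real.exp v := by
  have h := Real.sum_le_exp_of_nonneg hv 6
  simp only [Finset.sum_range_succ, Finset.sum_range_zero, Nat.factorial] at h
  norm_num at h
  refine le_trans ?_ h
  have hq : 0 ≤ 1 - v + v ^ 2 / 6 + v ^ 3 / 24 + v ^ 4 / 120 := by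
    nlinarith [mul_nonneg hv (sq_nonneg (v - 1.75)), sq_nonneg (v ^ 2 - 3), sq_nonneg (v - 1.555)]
  nlinarith [mul_nonneg hv hq]

lemma hz_kernel (θ s : ℝ) (hθ : 0 < θ) (hs : 3 / 2 < s) (hs2 : s ^ 2 = 2 / (3 * θ ^ 2) - 9 / 4)
    (w ρ : ℂ) (hw : w.re = s - 1 / 2) (h0 : 0 < ρ.re) (h1 : ρ.re < 1) :
    4.5 * s * θ ^ 2 * ((1 + 2 * ρ.re) / 3) ≤ Real.exp (θ * |w.im - ρ.im|) *
      Real.log (‖w + 1 + (starRingEnd ℂ) ρ‖ / ‖w - ρ‖) := by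
  set d := w.im - ρ.im with hd
  set h := ρ.re + 1 / 2 with hh
  have ea : ‖w + 1 + (starRingEnd ℂ) ρ‖ ^ 2 = (s + h) ^ 2 + d ^ 2 := by
    rw [← Complex.normSq_eq_norm_sq, Complex.normSq_apply]
    simp [hw, hd, hh]; ring
  have eb : ‖w - ρ‖ ^ 2 = (s - h) ^ 2 + d ^ 2 := by
    rw [← Complex.normSq_eq_norm_sq, Complex.normSq_apply]
    simp [hw, hd, hh]; ring
  have hBpos : 0 < (s - h) ^ 2 + d ^ 2 := by
    have : 0 < s - h := by rw [hh]; linarith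
    positivity
  have hApos : 0 < (s + h) ^ 2 + d ^ 2 := by
    have : 0 < s + h := by rw [hh]; linarith
    positivity
  have hlog : Real.log (‖w + 1 + (starRingEnd ℂ) ρ‖ / ‖w - ρ‖) =
      1 / 2 * Real.log (((s + h) ^ 2 + d ^ 2) / ((s - h) ^ 2 + d ^ 2)) := by
    rw [← ea, ← eb, ← div_pow, Real.log_pow]; push_cast; ring
  set B := (s - h) ^ 2 + d ^ 2 with hB
  have hsh : 0 < s * h := mul_pos (by linarith) (by rw [hh]; linarith)
  have hQ : 0 < s ^ 2 + h ^ 2 + d ^ 2 := by positivity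
  have hx : ((s + h) ^ 2 + d ^ 2) / B = 1 + 4 * (s * h) / B := by
    field_simp; rw [hB]; ring
  have hl := Real.le_log_one_add_of_nonneg (x := 4 * (s * h) / B) (by positivity)
  have hl2 : 2 * (4 * (s * h) / B) / (4 * (s * h) / B + 2) = 4 * (s * h) / (s ^ 2 + h ^ 2 + d ^ 2) := by
    have : 4 * (s * h) / B + 2 = 2 * (s ^ 2 + h ^ 2 + d ^ 2) / B := by
      field_simp; rw [hB]; ring
    rw [this]; field_simp
  rw [hl2, ← hx] at hl
  rw [hlog]
  have hq := hz_exp_quad (θ * |d|) (by positivity)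
  have hqd : (θ * |d|) ^ 2 = θ ^ 2 * d ^ 2 := by rw [mul_pow, sq_abs]
  rw [hqd] at hq
  have hh2 : h ^ 2 ≤ 9 / 4 := by rw [hh]; nlinarith
  have hQ2 : 1.5 * θ ^ 2 * (s ^ 2 + h ^ 2 + d ^ 2) ≤ Real.exp (θ * |d|) := by
    refine le_trans ?_ hq
    have : 1.5 * θ ^ 2 * (s ^ 2 + 9 / 4) = 1 := by rw [hs2]; field_simp; norm_num
    nlinarith [sq_nonneg θ]
  have e1 : (1 + 2 * ρ.re) / 3 = 2 * h / 3 := by rw [hh]; ring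
  rw [e1]
  calc 4.5 * s * θ ^ 2 * (2 * h / 3) = (1.5 * θ ^ 2 * (s ^ 2 + h ^ 2 + d ^ 2)) * (1 / 2 * (4 * (s * h) / (s ^ 2 + h ^ 2 + d ^ 2))) := by
        field_simp; ring
    _ ≤ _ := by gcongr

lemma hz_rpow_le (r β : ℝ) (hr : 0 < r) (h0 : 0 < β) (h1 : β < 1) :
    r ^ (β + 1) ≤ (1 + 2 * β) / 3 * (r ^ 2 + 9 / 4) := by
  have ha : r ^ β ≤ (1 - β) * 1 + β * r := by
    have := Real.geom_mean_le_arith_mean2_weighted (w₁ := 1 - β) (w₂ := β) (p₁ := 1) (p₂ := r)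
      (by linarith) h0.le zero_le_one hr.le (by ring)
    simpa using this
  rw [Real.rpow_add hr, Real.rpow_one]
  calc r ^ β * r ≤ ((1 - β) * 1 + β * r) * r := by gcongr
    _ ≤ _ := by nlinarith [sq_nonneg (r - 3/2), mul_nonneg h0.le (sq_nonneg (r-3/2)), mul_nonneg (sub_nonneg.2 h1.le) (sq_nonneg (r-3/2))]

noncomputable def hzA (C m : ℝ) : ℝ := ∫ r in Ioi (0:ℝ), (r ^ 2 + 9 / 4) * Real.exp (m * r - (C / 2) * r ^ 2)

lemma hzA_int (C m : ℝ) (hC : 0 < C) :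
    IntegrableOn (fun r : ℝ => (r ^ 2 + 9 / 4) * Real.exp (m * r - (C / 2) * r ^ 2)) (Ioi 0) := by
  have h1 := hz_int_rpow_gauss 2 m (C / 2) (by norm_num) (by linarith)
  have h2 := (hz_int_rpow_gauss 0 m (C / 2) (by norm_num) (by linarith)).const_mul (9 / 4)
  refine (h1.add h2).congr_fun ?_ measurableSet_Ioi
  intro r _
  simp only [Pi.add_apply, Real.rpow_zero, Real.rpow_two]
  ring

lemma hz_G_one (δ T θ s : ℝ) (hθ : 0 < θ) (hθ2 : θ ≤ 0.28) (hs : 3 / 2 < s)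
    (hs2 : s ^ 2 = 2 / (3 * θ ^ 2) - 9 / 4) (ε : ℝ) (hε : ε = 1 ∨ ε = -1)
    (w ρ : ℂ) (hw : w.re = s - 1 / 2) (hwi : w.im = ε * T) (h0 : 0 < ρ.re) (h1 : ρ.re < 1)
    (hρ : T ≤ ε * ρ.im) :
    ‖Gdelta δ ρ‖ ≤ Real.exp (-(θ * T)) / (4.5 * s * θ ^ 2) *
      hzA (Real.cos (2 * θ)) (-(2 * Real.pi * δ * (ε * Real.sin θ))) *
      Real.log (‖w + 1 + (starRingEnd ℂ) ρ‖ / ‖w - ρ‖) := by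
  have hsin : Real.sin (ε * θ) = ε * Real.sin θ := by rcases hε with h | h <;> simp [h]
  have hcos : Real.cos (ε * θ) = Real.cos θ := by rcases hε with h | h <;> simp [h]
  have hcos2 : Real.cos (2 * (ε * θ)) = Real.cos (2 * θ) := by rcases hε with h | h <;> simp [h]
  have habs : |ε| = 1 := by rcases hε with h | h <;> simp [h]
  have hcosl : 1 - θ ^ 2 / 2 ≤ Real.cos θ := Real.one_sub_sq_div_two_le_cos
  have hsl : Real.sin θ ≤ θ := Real.sin_le hθ.le
  have hs0 : 0 ≤ Real.sin θ := Real.sin_nonneg_of_nonneg_of_le_pi hθ.le (by linarith [Real.pi_gt_three])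
  have hC : 0 < Real.cos (2 * θ) := by
    have := Real.one_sub_sq_div_two_le_cos (x := 2 * θ)
    nlinarith
  have hb := hz_Gdelta_bound δ ρ h0 (ε * θ) (by rw [abs_mul, habs, abs_of_pos hθ]; linarith)
    (by rw [hsin, hcos, abs_mul, habs, abs_of_nonneg hs0]; nlinarith)
  rw [hsin, hcos2] at hb
  have hκ : 0 < 4.5 * s * θ ^ 2 := by have : 0 < s := by linarith
                                      positivity
  set K := Real.log (‖w + 1 + (starRingEnd ℂ) ρ‖ / ‖w - ρ‖) with hK
  have hk := hz_kernel θ s hθ hs hs2 w ρ hw h0 h1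
  have hd : |w.im - ρ.im| = ε * ρ.im - T := by
    have : w.im - ρ.im = ε * (T - ε * ρ.im) := by
      rw [hwi]; rcases hε with h | h <;> rw [h] <;> ring
    rw [this, abs_mul, habs, one_mul, abs_of_nonpos (by linarith)]; ring
  rw [hd, ← hK] at hk
  have hint := hzA_int (Real.cos (2 * θ)) (-(2 * Real.pi * δ * (ε * Real.sin θ))) hC
  have hA : ∫ r in Ioi (0:ℝ), r ^ (ρ.re + 1) *
      Real.exp (-(2 * Real.pi * δ * (ε * Real.sin θ)) * r - (Real.cos (2 * θ) / 2) * r ^ 2)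
      ≤ (1 + 2 * ρ.re) / 3 * hzA (Real.cos (2 * θ)) (-(2 * Real.pi * δ * (ε * Real.sin θ))) := by
    rw [hzA, ← integral_const_mul]
    refine setIntegral_mono_on (hz_int_rpow_gauss _ _ _ (by linarith) (by linarith)) (hint.const_mul _)
      measurableSet_Ioi fun r (hr : 0 < r) => ?_
    refine (mul_le_mul_of_nonneg_right (hz_rpow_le r _ hr h0 h1) (Real.exp_pos _).le).trans_eq ?_
    rw [mul_assoc]
  have hA0 : 0 ≤ hzA (Real.cos (2 * θ)) (-(2 * Real.pi * δ * (ε * Real.sin θ))) := by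
    apply setIntegral_nonneg measurableSet_Ioi; intro r _; positivity
  set A := hzA (Real.cos (2 * θ)) (-(2 * Real.pi * δ * (ε * Real.sin θ)))
  refine hb.trans ?_
  have hE : Real.exp (-(ε * θ * ρ.im)) * Real.exp (θ * (ε * ρ.im - T)) = Real.exp (-(θ * T)) := by
    rw [← Real.exp_add]; congr 1; ring
  calc Real.exp (-(ε * θ * ρ.im)) * _ ≤ Real.exp (-(ε * θ * ρ.im)) * ((1 + 2 * ρ.re) / 3 * A) := by gcongr
    _ ≤ Real.exp (-(ε * θ * ρ.im)) * (Real.exp (θ * (ε * ρ.im - T)) * K / (4.5 * s * θ ^ 2) * A) := by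
        refine mul_le_mul_of_nonneg_left (mul_le_mul_of_nonneg_right ?_ hA0) (Real.exp_pos _).le
        rw [le_div_iff₀ hκ]; linarith
    _ = (Real.exp (-(ε * θ * ρ.im)) * Real.exp (θ * (ε * ρ.im - T))) / (4.5 * s * θ ^ 2) * A * K := by ring
    _ = _ := by rw [hE]

lemma hzA_sum (C m : ℝ) (hC : 0 < C) :
    hzA C m + hzA C (-m) = Real.exp (m ^ 2 / (2 * C)) * Real.sqrt (2 * Real.pi / C) *
      (m ^ 2 / C ^ 2 + 1 / C + 9 / 4) := by
  set f : ℝ → ℝ := fun r => (r ^ 2 + 9 / 4) * Real.exp (m * r - (C / 2) * r ^ 2) with hf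
  have hfn : ∀ r, f (-r) = (r ^ 2 + 9 / 4) * Real.exp (-m * r - (C / 2) * r ^ 2) := by
    intro r; simp only [hf]; congr 2 <;> ring
  have h1 : hzA C (-m) = ∫ r in Iic (0:ℝ), f r := by
    have := integral_comp_neg_Ioi 0 f
    rw [neg_zero] at this
    rw [← this, hzA]
    exact setIntegral_congr_fun measurableSet_Ioi fun r _ => (hfn r).symm
  have hi1 : IntegrableOn f (Ioi 0) := hzA_int C m hC
  have hi2 : IntegrableOn f (Iic 0) := by
    have h2 := hzA_int C (-m) hC
    have h3 : IntegrableOn (fun r => f (-r)) (Ioi 0) := h2.congr_fun (fun r _ => (hfn r).symm) measurableSet_Ioi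
    have h4 := (MeasurePreserving.integrableOn_comp_preimage (e := fun x : ℝ => -x) (Measure.measurePreserving_neg volume)
      (Homeomorph.neg ℝ).measurableEmbedding (f := f) (s := Iio 0)).1 (by
        have hset : (fun x : ℝ => -x) ⁻¹' Iio 0 = Ioi 0 := by ext x; simp
        rw [hset]; exact h3)
    exact (integrableOn_Iic_iff_integrableOn_Iio (by simp)).2 h4
  have h2 : hzA C m + hzA C (-m) = ∫ r, f r := by
    rw [h1, add_comm]
    exact intervalIntegral.integral_Iic_add_Ioi hi2 hi1
  rw [h2]
  set v : NNReal := ⟨1 / C, by positivity⟩ with hv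
  have hvC : (v:ℝ) = 1 / C := rfl
  have hv0 : v ≠ 0 := by
    intro h
    have : (v:ℝ) = 0 := by rw [h]; rfl
    rw [hvC] at this
    have : 0 < 1 / C := by positivity
    linarith
  have hmem := ProbabilityTheory.memLp_id_gaussianReal (μ := m / C) (v := v) 2
  have hvar := ProbabilityTheory.variance_eq_sub hmem
  rw [ProbabilityTheory.variance_id_gaussianReal] at hvar
  simp only [id, Pi.pow_apply, ProbabilityTheory.integral_id_gaussianReal] at hvar
  have hsq : Integrable (fun x : ℝ => x ^ 2) (ProbabilityTheory.gaussianReal (m / C) v) := by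
    have := hmem.integrable_sq
    simpa using this
  have hI : ∫ x, (x ^ 2 + 9 / 4) ∂(ProbabilityTheory.gaussianReal (m / C) v) = m ^ 2 / C ^ 2 + 1 / C + 9 / 4 := by
    rw [integral_add hsq (integrable_const _)]
    simp only [integral_const, probReal_univ, smul_eq_mul, one_mul]
    rw [← hvC, hvar]; ring
  rw [← hI, ProbabilityTheory.integral_gaussianReal_eq_integral_smul hv0, ← integral_const_mul]
  congr 1
  ext x
  simp only [hf, ProbabilityTheory.gaussianPDFReal, smul_eq_mul, hvC]
  have hs : Real.sqrt (2 * Real.pi * (1 / C)) = Real.sqrt (2 * Real.pi / C) := by congr 1; ring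
  rw [hs]
  have hs0 : 0 < Real.sqrt (2 * Real.pi / C) := Real.sqrt_pos.2 (by positivity)
  have he : Real.exp (m * x - C / 2 * x ^ 2) = Real.exp (m ^ 2 / (2 * C)) * Real.exp (-(x - m / C) ^ 2 / (2 * (1 / C))) := by
    rw [← Real.exp_add]; congr 1; field_simp; ring
  rw [he]; field_simp


lemma hz_le_of_sq {a b : ℝ} (h : a ^ 2 ≤ b ^ 2) (hb : 0 ≤ b) : a ≤ b := by
  by_contra hc
  push Not at hc
  nlinarith

lemma hz_R (q : ℕ) [NeZero q] (T s : ℝ) (hT : 100 ≤ T) (hs : 5 / 2 ≤ s) (hsT : s ≤ 0.0293 * T) (w : ℂ)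
    (hw : w.re = s - 1 / 2) (hwi : w.im ^ 2 = T ^ 2) :
    Real.log (q * ‖w + 1‖ * ‖w + 2‖ * (Real.pi ^ 6 / 540) / (2 * Real.pi * ‖w - 1‖)) ≤
      1.22 * Real.log (q * T / (2 * Real.pi)) := by
  have hq : (1:ℝ) ≤ q := by exact_mod_cast Nat.one_le_iff_ne_zero.2 (NeZero.ne q)
  have hpi := Real.pi_pos
  have hp1 := Real.pi_gt_d6
  have hp2 := Real.pi_lt_d6
  have hT0 : 0 < T := by linarith
  have e1 : ‖w + 1‖ ^ 2 = (s + 1 / 2) ^ 2 + T ^ 2 := by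
    rw [← Complex.normSq_eq_norm_sq, Complex.normSq_apply]
    simp [hw]
    rw [← hwi]; ring
  have e2 : ‖w + 2‖ ^ 2 = (s + 3 / 2) ^ 2 + T ^ 2 := by
    rw [← Complex.normSq_eq_norm_sq, Complex.normSq_apply]
    simp [hw]
    rw [← hwi]; ring
  have e3 : ‖w - 1‖ ^ 2 = (s - 3 / 2) ^ 2 + T ^ 2 := by
    rw [← Complex.normSq_eq_norm_sq, Complex.normSq_apply]
    simp [hw]
    rw [← hwi]; ring
  have f1 : ‖w + 1‖ ≤ 1.001 * T := by
    refine hz_le_of_sq ?_ (by linarith)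
    have h1 : s + 1 / 2 ≤ 0.0443 * T := by linarith
    have h2 : (s + 1 / 2) ^ 2 ≤ (0.0443 * T) ^ 2 := by gcongr
    rw [e1]; linarith [sq_nonneg T]
  have f2 : ‖w + 2‖ ≤ 1.001 * T := by
    refine hz_le_of_sq ?_ (by linarith)
    have h1 : s + 3 / 2 ≤ 0.0443 * T := by linarith
    have h2 : (s + 3 / 2) ^ 2 ≤ (0.0443 * T) ^ 2 := by gcongr
    rw [e2]; linarith [sq_nonneg T]
  have f3 : T ≤ ‖w - 1‖ := by
    refine hz_le_of_sq ?_ (norm_nonneg _)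
    rw [e3]; linarith [sq_nonneg (s - 3 / 2)]
  have n1 : 0 < ‖w + 1‖ := by
    apply lt_of_le_of_ne (norm_nonneg _); intro h; rw [← h] at e1
    have : 0 < (s + 1 / 2) ^ 2 + T ^ 2 := by positivity
    linarith
  have n2 : 0 < ‖w + 2‖ := by
    apply lt_of_le_of_ne (norm_nonneg _); intro h; rw [← h] at e2
    have : 0 < (s + 3 / 2) ^ 2 + T ^ 2 := by positivity
    linarith
  have hpi6 : Real.pi ^ 6 / 540 ≤ 1.7804 := by
    have : Real.pi ^ 6 ≤ 3.141593 ^ 6 := by gcongr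
    norm_num at this ⊢; linarith
  have hq0 : (0:ℝ) < q := by linarith
  set x := q * T / (2 * Real.pi) with hx
  have hx0 : 0 < x := by positivity
  have hx1 : 15.9 ≤ x := by
    rw [hx, le_div_iff₀ (by positivity)]
    have : 1 * T ≤ q * T := by gcongr
    linarith
  have hle : q * ‖w + 1‖ * ‖w + 2‖ * (Real.pi ^ 6 / 540) / (2 * Real.pi * ‖w - 1‖) ≤ 1.79 * x := by
    calc _ ≤ q * (1.001 * T) * (1.001 * T) * 1.7804 / (2 * Real.pi * T) := by gcongr
      _ = (1.001 * 1.001 * 1.7804) * x := by rw [hx]; field_simp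
      _ ≤ 1.79 * x := by gcongr; norm_num
  have hpos : 0 < q * ‖w + 1‖ * ‖w + 2‖ * (Real.pi ^ 6 / 540) / (2 * Real.pi * ‖w - 1‖) := by
    have : 0 < ‖w - 1‖ := by linarith
    positivity
  refine (Real.log_le_log hpos hle).trans ?_
  rw [Real.log_mul (by norm_num) hx0.ne']
  have h5 : 50 * Real.log 1.79 ≤ 11 * Real.log 15.9 := by
    have := Real.log_le_log (x := 1.79 ^ 50) (y := 15.9 ^ 11) (by positivity) (by norm_num)
    rw [Real.log_pow, Real.log_pow] at this
    exact_mod_cast this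
  have h6 := Real.log_le_log (by norm_num) hx1
  linarith

set_option maxHeartbeats 1000000 in
lemma hz_main_S (δ : ℝ) (q : ℕ) [NeZero q] (χ : DirichletCharacter ℂ q) (hχ : χ.IsPrimitive)
    (T θ Λ : ℝ) (hT : 100 ≤ T) (hθ : 0 < θ) (hθ2 : θ ≤ 0.28) (hθT : 28 ≤ θ * T)
    (hΛ : (Real.pi * δ) ^ 2 ≤ Λ) (hΛθ : Λ * θ = 14 / 75 * T) (S : Finset ℂ)
    (hS : ∀ ρ ∈ S, χ.LFunction ρ = 0 ∧ 0 < ρ.re ∧ ρ.re < 1 ∧ T < |ρ.im|) :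
    ∑ ρ ∈ S, ‖Gdelta δ ρ‖ ≤ T * Real.log (q * T / (2 * Real.pi)) *
      ((1.22 / 3.15) * Real.sqrt (2 * Real.pi / Real.cos (2 * θ)) *
        (4 * (14 / 75) / Real.cos (2 * θ) ^ 2 + (1 / Real.cos (2 * θ) + 9 / 4) / 28) *
        Real.exp (-(θ * T) + Λ * (1 / Real.cos (2 * θ) - 1))) := by
  have hT0 : 0 < T := by linarith
  have hu : 0 ≤ 2 / (3 * θ ^ 2) - 9 / 4 := by
    rw [sub_nonneg, le_div_iff₀ (by positivity)]; nlinarith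
  set s := Real.sqrt (2 / (3 * θ ^ 2) - 9 / 4) with hsdef
  have hs2 : s ^ 2 = 2 / (3 * θ ^ 2) - 9 / 4 := Real.sq_sqrt hu
  have hs0 : 0 ≤ s := Real.sqrt_nonneg _
  have hsθ : s ^ 2 * θ ^ 2 = 2 / 3 - 9 / 4 * θ ^ 2 := by rw [hs2]; field_simp
  have hs5 : 5 / 2 ≤ s := by
    refine hz_le_of_sq ?_ hs0
    rw [hs2, le_sub_iff_add_le, le_div_iff₀ (by positivity)]; nlinarith
  have hsθl : 0.7 ≤ s * θ := by
    refine hz_le_of_sq ?_ (by positivity)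
    rw [mul_pow, hsθ]; nlinarith
  have hsθu : s * θ ≤ 0.8165 := by
    refine hz_le_of_sq ?_ (by norm_num)
    rw [mul_pow, hsθ]; nlinarith
  have hsT : s ≤ 0.0293 * T := by
    have : s * 28 ≤ 0.8165 * T := by
      calc s * 28 ≤ s * (θ * T) := by gcongr
        _ = s * θ * T := by ring
        _ ≤ 0.8165 * T := by gcongr
    linarith
  set C := Real.cos (2 * θ) with hCdef
  have hC : 0 < C := by
    have := Real.one_sub_sq_div_two_le_cos (x := 2 * θ)
    nlinarith
  have hC1 : C = 1 - 2 * Real.sin θ ^ 2 := by rw [hCdef, Real.cos_two_mul']; nlinarith [Real.sin_sq_add_cos_sq θ]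
  set R := 1.22 * Real.log (q * T / (2 * Real.pi)) with hR
  have hκ : 0 < 4.5 * s * θ ^ 2 := by have : 0 < s := by linarith
                                      positivity
  set κ := 4.5 * s * θ ^ 2 with hκd
  have hA0 : ∀ m, 0 ≤ hzA C m := by
    intro m
    apply setIntegral_nonneg measurableSet_Ioi; intro r _; positivity
  have hside : ∀ ε : ℝ, (ε = 1 ∨ ε = -1) → ∀ S' : Finset ℂ, (∀ ρ ∈ S', χ.LFunction ρ = 0 ∧ 0 < ρ.re ∧ ρ.re < 1 ∧ T ≤ ε * ρ.im) →
      ∑ ρ ∈ S', ‖Gdelta δ ρ‖ ≤ Real.exp (-(θ * T)) / κ * hzA C (-(2 * Real.pi * δ * (ε * Real.sin θ))) * R := by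
    intro ε hε S' hS'
    set w : ℂ := ⟨s - 1 / 2, ε * T⟩ with hw
    have h1 : ∑ ρ ∈ S', ‖Gdelta δ ρ‖ ≤ ∑ ρ ∈ S', Real.exp (-(θ * T)) / κ * hzA C (-(2 * Real.pi * δ * (ε * Real.sin θ))) *
        Real.log (‖w + 1 + (starRingEnd ℂ) ρ‖ / ‖w - ρ‖) := by
      refine Finset.sum_le_sum fun ρ hρ => ?_
      obtain ⟨_, h0, h1, h2⟩ := hS' ρ hρ
      exact hz_G_one δ T θ s hθ hθ2 (by linarith) hs2 ε hε w ρ rfl rfl h0 h1 h2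
    refine h1.trans ?_
    rw [← Finset.mul_sum]
    have h2 := hz_zero_sum χ hχ S' (fun ρ hρ => ⟨(hS' ρ hρ).1, (hS' ρ hρ).2.1, (hS' ρ hρ).2.2.1⟩) w
      (by show 2 ≤ s - 1 / 2; linarith)
    have h3 := hz_R q T s hT hs5 hsT w rfl (by show (ε * T) ^ 2 = T ^ 2; rcases hε with h | h <;> rw [h] <;> ring)
    exact mul_le_mul_of_nonneg_left (h2.trans h3) (mul_nonneg (by positivity) (hA0 _))
  have hp := hside 1 (Or.inl rfl) (S.filter (fun ρ => 0 < ρ.im)) (by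
    intro ρ hρ
    rw [Finset.mem_filter] at hρ
    obtain ⟨a, b, c, d⟩ := hS ρ hρ.1
    rw [abs_of_pos hρ.2] at d
    exact ⟨a, b, c, by linarith⟩)
  have hn := hside (-1) (Or.inr rfl) (S.filter (fun ρ => ¬ 0 < ρ.im)) (by
    intro ρ hρ
    rw [Finset.mem_filter] at hρ
    obtain ⟨a, b, c, d⟩ := hS ρ hρ.1
    rw [abs_of_nonpos (not_lt.1 hρ.2)] at d
    exact ⟨a, b, c, by linarith⟩)
  rw [← Finset.sum_filter_add_sum_filter_not S (fun ρ => 0 < ρ.im)]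
  set m := 2 * Real.pi * δ * Real.sin θ with hm
  have em1 : -(2 * Real.pi * δ * (1 * Real.sin θ)) = -m := by rw [hm]; ring
  have em2 : -(2 * Real.pi * δ * (-1 * Real.sin θ)) = m := by rw [hm]; ring
  rw [em1] at hp
  rw [em2] at hn
  have hsum := hzA_sum C m hC
  have hlog0 : 0 ≤ Real.log (q * T / (2 * Real.pi)) := by
    apply Real.log_nonneg
    rw [le_div_iff₀ (by positivity)]
    have hq : (1:ℝ) ≤ q := by exact_mod_cast Nat.one_le_iff_ne_zero.2 (NeZero.ne q)
    have : 1 * T ≤ q * T := by gcongr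
    linarith [Real.pi_lt_four]
  set l := Real.log (q * T / (2 * Real.pi)) with hl
  have hm1 : m ^ 2 ≤ 2 * Λ * (1 - C) := by
    have h1 : 2 * Λ * (1 - C) = 4 * Real.sin θ ^ 2 * Λ := by rw [hC1]; ring
    have h2 : m ^ 2 = 4 * Real.sin θ ^ 2 * (Real.pi * δ) ^ 2 := by rw [hm]; ring
    rw [h1, h2]; gcongr
  have hsl : Real.sin θ ^ 2 ≤ θ ^ 2 := Real.sin_sq_le_sq
  have hΛ0 : 0 ≤ Λ := (sq_nonneg _).trans hΛ
  have hm2 : m ^ 2 ≤ 4 * (14 / 75) * T * θ := by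
    have : m ^ 2 ≤ 4 * Λ * θ ^ 2 := by
      refine hm1.trans ?_
      have h1 : 2 * Λ * (1 - C) = 4 * Λ * Real.sin θ ^ 2 := by rw [hC1]; ring
      rw [h1]; gcongr
    calc m ^ 2 ≤ 4 * Λ * θ ^ 2 := this
      _ = 4 * θ * (Λ * θ) := by ring
      _ = _ := by rw [hΛθ]; ring
  have hexp : Real.exp (-(θ * T)) * Real.exp (m ^ 2 / (2 * C)) ≤ Real.exp (-(θ * T) + Λ * (1 / C - 1)) := by
    rw [← Real.exp_add]
    apply Real.exp_le_exp.2
    have : m ^ 2 / (2 * C) ≤ Λ * (1 / C - 1) := by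
      rw [div_le_iff₀ (by positivity)]
      have : Λ * (1 / C - 1) * (2 * C) = 2 * Λ * (1 - C) := by field_simp
      linarith
    linarith
  have hκl : 3.15 * θ ≤ κ := by
    rw [hκd]
    calc 3.15 * θ = 4.5 * 0.7 * θ := by norm_num
      _ ≤ 4.5 * (s * θ) * θ := by gcongr
      _ = _ := by ring
  have hpoly : (m ^ 2 / C ^ 2 + 1 / C + 9 / 4) / κ ≤ T * (4 * (14 / 75) / C ^ 2 + (1 / C + 9 / 4) / 28) / 3.15 := by
    calc (m ^ 2 / C ^ 2 + 1 / C + 9 / 4) / κ ≤ (m ^ 2 / C ^ 2 + 1 / C + 9 / 4) / (3.15 * θ) := by gcongr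
      _ ≤ ((4 * (14 / 75) * T * θ) / C ^ 2 + (1 / C + 9 / 4) * (θ * T / 28)) / (3.15 * θ) := by
          refine div_le_div_of_nonneg_right ?_ (by positivity)
          have : (1 / C + 9 / 4) * 1 ≤ (1 / C + 9 / 4) * (θ * T / 28) := by
            gcongr; linarith
          have h2 : m ^ 2 / C ^ 2 ≤ (4 * (14 / 75) * T * θ) / C ^ 2 := by gcongr
          linarith
      _ = _ := by field_simp
  calc _ ≤ Real.exp (-(θ * T)) / κ * (hzA C m + hzA C (-m)) * R := by linarith
    _ = (Real.exp (-(θ * T)) * Real.exp (m ^ 2 / (2 * C))) * Real.sqrt (2 * Real.pi / C) *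
        ((m ^ 2 / C ^ 2 + 1 / C + 9 / 4) / κ) * (1.22 * l) := by rw [hsum, hR]; ring
    _ ≤ Real.exp (-(θ * T) + Λ * (1 / C - 1)) * Real.sqrt (2 * Real.pi / C) *
        (T * (4 * (14 / 75) / C ^ 2 + (1 / C + 9 / 4) / 28) / 3.15) * (1.22 * l) := by gcongr
    _ = _ := by ring


lemma hz_cos_lb (θ : ℝ) (h0 : 0 ≤ θ) (h1 : θ ≤ 0.28) :
    1 - 2 * θ ^ 2 + 0.6666 * (θ ^ 2) ^ 2 - 0.0956 * (θ ^ 2) ^ 3 ≤ Real.cos (2 * θ) := by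
  have hC1 : Real.cos (2 * θ) = 1 - 2 * Real.sin θ ^ 2 := by
    rw [Real.cos_two_mul']; linarith [Real.sin_sq_add_cos_sq θ]
  have hb := Real.sin_bound (x := θ) (by rw [abs_of_nonneg h0]; linarith)
  rw [abs_of_nonneg h0, abs_le] at hb
  have hs0 : 0 ≤ Real.sin θ := Real.sin_nonneg_of_nonneg_of_le_pi h0 (by linarith [Real.pi_gt_three])
  have hs : Real.sin θ ≤ θ - θ ^ 3 / 6 + θ ^ 5 / 100 := by linarith [hb.2]
  have hsq : Real.sin θ ^ 2 ≤ (θ - θ ^ 3 / 6 + θ ^ 5 / 100) ^ 2 := by gcongr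
  rw [hC1]
  set x := θ ^ 2 with hx
  have hx0 : 0 ≤ x := sq_nonneg θ
  have hx1 : x ≤ 0.0784 := by rw [hx]; nlinarith
  have e : (θ - θ ^ 3 / 6 + θ ^ 5 / 100) ^ 2 = x * (1 - x / 6 + x ^ 2 / 100) ^ 2 := by rw [hx]; ring
  rw [e] at hsq
  have h2 : 0 ≤ x ^ 2 := by positivity
  have h3 : 0 ≤ x ^ 3 := by positivity
  have h4 : 0 ≤ x ^ 4 * (0.0784 - x) := mul_nonneg (by positivity) (by linarith)
  have h5 : 0 ≤ x ^ 4 := by positivity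
  nlinarith

lemma hz_inv_cos (θ : ℝ) (h0 : 0 ≤ θ) (h1 : θ ≤ 0.28) :
    1 / Real.cos (2 * θ) - 1 ≤ 2 * θ ^ 2 + 3.823 * (θ ^ 2) ^ 2 := by
  have hc := hz_cos_lb θ h0 h1
  set x := θ ^ 2 with hx
  have hx0 : 0 ≤ x := sq_nonneg θ
  have hx1 : x ≤ 0.0784 := by rw [hx]; nlinarith
  have hC : 0 < Real.cos (2 * θ) := by
    have h3 : x ^ 3 ≤ 0.0784 ^ 3 := by gcongr
    nlinarith [sq_nonneg x]
  rw [sub_le_iff_le_add, div_le_iff₀ hC]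
  have h6 : 1 ≤ (2 * x + 3.823 * x ^ 2 + 1) * (1 - 2 * x + 0.6666 * x ^ 2 - 0.0956 * x ^ 3) := by
    have : 0 ≤ x ^ 2 * (0.4896 - 6.4084 * x + 2.357 * x ^ 2 - 0.3655 * x ^ 3) := by
      apply mul_nonneg (sq_nonneg x)
      have h3 : x ^ 3 ≤ 0.0784 ^ 3 := by gcongr
      nlinarith [sq_nonneg (x - 0.0784)]
    have h4 : 0 ≤ x ^ 3 := by positivity
    have h5 : 0 ≤ x ^ 4 := by positivity
    have h7 : 0 ≤ x ^ 5 := by positivity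
    have h2 : 0 ≤ x ^ 2 := by positivity
    nlinarith
  refine h6.trans ?_
  gcongr

lemma hz_A_le (C C0 r B : ℝ) (hC0 : 0 < C0) (hC : C0 ≤ C) (hr0 : 0 ≤ r) (hr : 6.283186 / C0 ≤ r ^ 2)
    (hB : (1.22 / 3.15) * r * (4 * (14 / 75) / C0 ^ 2 + (1 / C0 + 9 / 4) / 28) ≤ B) :
    (1.22 / 3.15) * Real.sqrt (2 * Real.pi / C) *
        (4 * (14 / 75) / C ^ 2 + (1 / C + 9 / 4) / 28) ≤ B := by
  refine le_trans ?_ hB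
  have h1 : Real.sqrt (2 * Real.pi / C) ≤ r := by
    rw [Real.sqrt_le_left hr0]
    refine le_trans ?_ hr
    have := Real.pi_lt_d6
    have : 2 * Real.pi ≤ 6.283186 := by linarith
    gcongr
  have hC' : 0 < C := by linarith
  gcongr

lemma hz_exp_tan (c y : ℝ) : Real.exp c * (1 + (y - c)) ≤ Real.exp y := by
  have h := Real.add_one_le_exp (y - c)
  calc Real.exp c * (1 + (y - c)) ≤ Real.exp c * Real.exp (y - c) := by gcongr; linarith
    _ = _ := by rw [← Real.exp_add]; congr 1; ring

lemma hz_exp_vals : 1.4917 ≤ Real.exp 0.4 ∧ 1.822 ≤ Real.exp 0.6 ∧ 1.91 ≤ Real.exp 0.65 ∧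
    0.0497 ≤ Real.exp (-3) ∧ Real.exp (-3) ≤ 0.0498 := by
  have aux : ∀ v : ℝ, 0 ≤ v → 1 + v + v ^ 2 / 2 + v ^ 3 / 6 + v ^ 4 / 24 + v ^ 5 / 120 ≤ Real.exp v := by
    intro v hv
    have h := Real.sum_le_exp_of_nonneg hv 6
    simp only [Finset.sum_range_succ, Finset.sum_range_zero, Nat.factorial] at h
    norm_num at h
    exact h
  have e3 : Real.exp (-3) = (Real.exp 1 ^ 3)⁻¹ := by
    rw [← Real.exp_nat_mul, ← Real.exp_neg]; norm_num
  have l := Real.exp_one_gt_d9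
  have u := Real.exp_one_lt_d9
  refine ⟨?_, ?_, ?_, ?_, ?_⟩
  · refine le_trans ?_ (aux 0.4 (by norm_num)); norm_num
  · refine le_trans ?_ (aux 0.6 (by norm_num)); norm_num
  · refine le_trans ?_ (aux 0.65 (by norm_num)); norm_num
  · rw [e3, le_inv_comm₀ (by norm_num) (by positivity)]
    calc Real.exp 1 ^ 3 ≤ 2.7182818286 ^ 3 := by gcongr
      _ ≤ _ := by norm_num
  · rw [e3, inv_le_comm₀ (by positivity) (by norm_num)]
    calc (0.0498:ℝ)⁻¹ ≤ 2.7182818283 ^ 3 := by norm_num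
      _ ≤ _ := by gcongr

lemma hz_expo (T ρ : ℝ) (hT : 100 ≤ T) (h0 : 0 < ρ) (h1 : ρ ≤ 3 / 2) :
    -(14 / 75 * ρ * T) + T / ρ * (1 / Real.cos (2 * (14 / 75 * ρ)) - 1) ≤
      -(T * ρ * (0.1169777 - 0.0046417 * ρ ^ 2)) := by
  have h := hz_inv_cos (14 / 75 * ρ) (by positivity) (by linarith)
  have hT0 : 0 < T / ρ := by positivity
  have h2 := mul_le_mul_of_nonneg_left h hT0.le
  have e : T / ρ * (2 * (14 / 75 * ρ) ^ 2 + 3.823 * ((14 / 75 * ρ) ^ 2) ^ 2) =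
     T * ρ * (2 * (14 / 75) ^ 2 + 3.823 * (14 / 75) ^ 4 * ρ ^ 2) := by field_simp
  rw [e] at h2
  have h3 : 0 < T * ρ := by positivity
  have h4 : 2 * (14 / 75) ^ 2 + 3.823 * (14 / 75) ^ 4 * ρ ^ 2 ≤ 14 / 75 - (0.1169777 - 0.0046417 * ρ ^ 2) := by
    nlinarith [sq_nonneg ρ]
  have h5 := mul_le_mul_of_nonneg_left h4 h3.le
  linarith

lemma hz_tan_comb (T ρ a b' c B E : ℝ) (hT : 100 ≤ T) (h1 : ρ ≤ 3 / 2)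
    (ha : a ≤ 0.0046417 * ρ * (3 / 2 + ρ)) (hρ : 0 < ρ)
    (hab : 0.106534 - a ≤ b') (hE : E ≤ Real.exp c) (hE0 : 0 ≤ E) (ha0 : 0 ≤ a) (hb0 : 0 ≤ b') (hc : 0 ≤ 1 - c)
    (hslope : 3.5 * 0.0498 * b' ≤ 0.64 * E * a) (hconst : B ≤ 0.64 * E * (1 - c) + 3.5 * 0.0497 * 4) :
    B ≤ 3.5 * Real.exp (T * ρ * (0.1169777 - 0.0046417 * ρ ^ 2) - 0.1598 * T) +
      0.64 * Real.exp (T * ρ * (0.1169777 - 0.0046417 * ρ ^ 2) - 0.1065 * (ρ * T)) := by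
  set X := T * (3 / 2 - ρ) with hX
  have hX0 : 0 ≤ X := mul_nonneg (by linarith) (by linarith)
  set y2 := T * ρ * (0.1169777 - 0.0046417 * ρ ^ 2) - 0.1065 * (ρ * T) with hy2
  set y1 := T * ρ * (0.1169777 - 0.0046417 * ρ ^ 2) - 0.1598 * T with hy1
  have hT0 : 0 < T := by linarith
  have e2 : y2 = 0.000033875 * (ρ * T) + X * (0.0046417 * ρ * (3 / 2 + ρ)) := by
    rw [hy2, hX]; ring
  have e1 : y1 = y2 - 0.1065 * X - 0.00005 * T := by
    rw [hy2, hX]; ring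
  have e3 : ρ * T = 3 / 2 * T - X := by rw [hX]; ring
  have h3 := mul_le_mul_of_nonneg_left ha hX0
  have hy2l : a * X ≤ y2 := by
    have : 0 ≤ ρ * T := by positivity
    rw [e2]; linarith
  have hy1l : -(b' * X) ≤ y1 := by
    rw [e1, e2, e3]
    have := mul_le_mul_of_nonneg_right hab hX0
    linarith
  obtain ⟨_, _, _, l3, u3⟩ := hz_exp_vals
  have t1 : Real.exp (-3) * (1 + (-(b' * X) - -3)) ≤ Real.exp y1 := (hz_exp_tan _ _).trans (Real.exp_le_exp.2 hy1l)
  have t2 : Real.exp c * (1 + (a * X - c)) ≤ Real.exp y2 := (hz_exp_tan _ _).trans (Real.exp_le_exp.2 hy2l)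
  have hbX : 0 ≤ b' * X := by positivity
  have haX : 0 ≤ a * X := by positivity
  have t3 : E * (1 + (a * X - c)) ≤ Real.exp c * (1 + (a * X - c)) :=
    mul_le_mul_of_nonneg_right hE (by linarith)
  have t4 := mul_le_mul_of_nonneg_right u3 hbX
  have t5 := mul_le_mul_of_nonneg_right hslope hX0
  nlinarith

lemma hz_num1 (T : ℝ) (hT : 100 ≤ T) :
    (1.22 / 3.15) * Real.sqrt (2 * Real.pi / Real.cos (2 * (14 / 75 * (3 / 2)))) *
        (4 * (14 / 75) / Real.cos (2 * (14 / 75 * (3 / 2))) ^ 2 + (1 / Real.cos (2 * (14 / 75 * (3 / 2))) + 9 / 4) / 28) *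
        Real.exp (-(14 / 75 * (3 / 2) * T) + T / (3 / 2) * (1 / Real.cos (2 * (14 / 75 * (3 / 2))) - 1))
      ≤ 3.5 * Real.exp (-0.1598 * T) := by
  have hc := hz_cos_lb (14 / 75 * (3 / 2)) (by norm_num) (by norm_num)
  have hA := hz_A_le (Real.cos (2 * (14 / 75 * (3 / 2)))) 0.847 2.7238 1.23 (by norm_num)
    (le_trans (by norm_num) hc) (by norm_num) (by norm_num) (by norm_num)
  have he := hz_expo T (3 / 2) hT (by norm_num) le_rfl
  have hT0 : 0 < T := by linarith
  refine mul_le_mul (hA.trans (by norm_num)) (Real.exp_le_exp.2 (he.trans ?_)) (Real.exp_pos _).le (by norm_num)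
  norm_num; linarith

lemma hz_num2 (T ρ : ℝ) (hT : 100 ≤ T) (h0 : 0 < ρ) (h1 : ρ ≤ 3 / 2) (hy : 150 ≤ ρ * T) :
    (1.22 / 3.15) * Real.sqrt (2 * Real.pi / Real.cos (2 * (14 / 75 * ρ))) *
        (4 * (14 / 75) / Real.cos (2 * (14 / 75 * ρ)) ^ 2 + (1 / Real.cos (2 * (14 / 75 * ρ)) + 9 / 4) / 28) *
        Real.exp (-(14 / 75 * ρ * T) + T / ρ * (1 / Real.cos (2 * (14 / 75 * ρ)) - 1))
      ≤ 3.5 * Real.exp (-0.1598 * T) + 0.64 * Real.exp (-0.1065 * (ρ * T)) := by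
  have hc := hz_cos_lb (14 / 75 * ρ) (by positivity) (by linarith)
  have he := hz_expo T ρ hT h0 h1
  set y := T * ρ * (0.1169777 - 0.0046417 * ρ ^ 2) with hyd
  obtain ⟨v4, v6, v65, _, _⟩ := hz_exp_vals
  have hmono : ∀ θ : ℝ, ∀ x0 : ℝ, (θ ^ 2) ≤ x0 → x0 ≤ 0.0784 → 1 - 2 * x0 + 0.6666 * x0 ^ 2 - 0.0956 * x0 ^ 3 ≤
      1 - 2 * θ ^ 2 + 0.6666 * (θ ^ 2) ^ 2 - 0.0956 * (θ ^ 2) ^ 3 := by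
    intro θ x0 hx hx0
    set x := θ ^ 2
    have hx1 : 0 ≤ x := sq_nonneg θ
    have : 0 ≤ (x0 - x) * (2 - 0.6666 * (x0 + x) + 0.0956 * (x0 ^ 2 + x0 * x + x ^ 2)) := by
      apply mul_nonneg (by linarith)
      have : 0 ≤ x0 * x := mul_nonneg (by linarith) hx1
      linarith [sq_nonneg x0, sq_nonneg x]
    linarith
  have key : ∀ B : ℝ, (1.22 / 3.15) * Real.sqrt (2 * Real.pi / Real.cos (2 * (14 / 75 * ρ))) *
        (4 * (14 / 75) / Real.cos (2 * (14 / 75 * ρ)) ^ 2 + (1 / Real.cos (2 * (14 / 75 * ρ)) + 9 / 4) / 28) ≤ B → 0 ≤ B →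
      B ≤ 3.5 * Real.exp (y - 0.1598 * T) + 0.64 * Real.exp (y - 0.1065 * (ρ * T)) →
      (1.22 / 3.15) * Real.sqrt (2 * Real.pi / Real.cos (2 * (14 / 75 * ρ))) *
        (4 * (14 / 75) / Real.cos (2 * (14 / 75 * ρ)) ^ 2 + (1 / Real.cos (2 * (14 / 75 * ρ)) + 9 / 4) / 28) *
        Real.exp (-(14 / 75 * ρ * T) + T / ρ * (1 / Real.cos (2 * (14 / 75 * ρ)) - 1))
      ≤ 3.5 * Real.exp (-0.1598 * T) + 0.64 * Real.exp (-0.1065 * (ρ * T)) := by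
    intro B hA hB h
    refine (mul_le_mul hA (Real.exp_le_exp.2 he) (Real.exp_pos _).le hB).trans ?_
    refine (mul_le_mul_of_nonneg_right h (Real.exp_pos _).le).trans_eq ?_
    rw [add_mul, mul_assoc, mul_assoc, ← Real.exp_add, ← Real.exp_add]
    congr 3 <;> ring_nf
  have hAii := fun h => hz_A_le (Real.cos (2 * (14 / 75 * ρ))) 0.847 2.7238 1.23 (by norm_num)
    h (by norm_num) (by norm_num) (by norm_num)
  have hAiii := fun h => hz_A_le (Real.cos (2 * (14 / 75 * ρ))) 0.884 2.6662 1.115 (by norm_num)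
    h (by norm_num) (by norm_num) (by norm_num)
  have hx15 : (14 / 75 * ρ) ^ 2 ≤ (14 / 75 * (3 / 2)) ^ 2 := by gcongr
  rcases le_total 1.3 ρ with h | h
  · refine key 1.23 (hAii ?_) (by norm_num) ?_
    · refine le_trans ?_ ((hmono _ _ hx15 (by norm_num)).trans hc); norm_num
    · refine hz_tan_comb T ρ 0.0168 0.0898 0.4 1.23 1.4917 hT h1 ?_ h0 (by norm_num) v4 (by norm_num) (by norm_num)
        (by norm_num) (by norm_num) (by norm_num) (by norm_num)
      nlinarith
  have hx13 : (14 / 75 * ρ) ^ 2 ≤ (14 / 75 * 1.3) ^ 2 := by gcongr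
  have hA3 := hAiii (le_trans (by norm_num) ((hmono _ _ hx13 (by norm_num)).trans hc))
  refine key 1.115 hA3 (by norm_num) ?_
  rcases le_total 1.15 ρ with h' | h'
  · refine hz_tan_comb T ρ 0.0141 0.0925 0.6 1.115 1.822 hT h1 ?_ h0 (by norm_num) v6 (by norm_num) (by norm_num)
        (by norm_num) (by norm_num) (by norm_num) (by norm_num)
    nlinarith
  · have h2 : ρ ^ 2 ≤ 1.15 ^ 2 := by gcongr
    have h3 : 0.65 ≤ y - 0.1065 * (ρ * T) := by
      have h4 : 150 * 0.0043383 ≤ (ρ * T) * (0.0104777 - 0.0046417 * ρ ^ 2) := by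
        apply mul_le_mul hy (by linarith) (by norm_num) (by linarith)
      rw [hyd]; linarith
    have h5 := v65.trans (Real.exp_le_exp.2 h3)
    have := Real.exp_pos (y - 0.1598 * T)
    linarith

/-- **Lemma 4.7**: bound on the sum of `|G_δ(ρ)|` over high nontrivial zeros, for
the smoothing `η(t) = t² e^{-t²/2}`. -/
theorem sum_Gdelta_tsq_high_zeros_bound
    (δ : ℝ) (q : ℕ) [NeZero q] (χ : DirichletCharacter ℂ q) (hχ : χ.IsPrimitive)
    (T₀ : ℝ) (hT₀ : max (4 * Real.pi^2 * |δ|) 100 ≤ T₀)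
    (hGRH : ∀ ρ : ℂ, χ.LFunction ρ = 0 → 0 < ρ.re → ρ.re < 1 → |ρ.im| ≤ T₀ →
      ρ.re = 1/2) :
    (∑' ρ : {ρ : ℂ // χ.LFunction ρ = 0 ∧ 0 < ρ.re ∧ ρ.re < 1 ∧ T₀ < |ρ.im|},
        ‖Gdelta δ ρ‖)
      ≤ T₀ * Real.log (q * T₀ / (2 * Real.pi))
          * (3.5 * Real.exp (-0.1598 * T₀)
            + 0.64 * Real.exp (-0.1065 * T₀^2 / (Real.pi * δ)^2)) := by
  have hT : 100 ≤ T₀ := (le_max_right _ _).trans hT₀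
  have hTδ : 4 * Real.pi ^ 2 * |δ| ≤ T₀ := (le_max_left _ _).trans hT₀
  have hT0 : 0 < T₀ := by linarith
  have hpi := Real.pi_pos
  have hlog0 : 0 ≤ Real.log (q * T₀ / (2 * Real.pi)) := by
    apply Real.log_nonneg
    rw [le_div_iff₀ (by positivity)]
    have hq : (1:ℝ) ≤ q := by exact_mod_cast Nat.one_le_iff_ne_zero.2 (NeZero.ne q)
    have : 1 * T₀ ≤ q * T₀ := by gcongr
    linarith [Real.pi_lt_four]
  have hTl : 0 ≤ T₀ * Real.log (q * T₀ / (2 * Real.pi)) := by positivity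
  refine Real.tsum_le_of_sum_le ?_ ?_
  · intro ρ; positivity
  intro F
  set S : Finset ℂ := F.map (Function.Embedding.subtype _) with hSd
  have hsum : ∑ ρ ∈ F, ‖Gdelta δ ρ‖ = ∑ ρ ∈ S, ‖Gdelta δ ρ‖ := by
    rw [hSd, Finset.sum_map]; rfl
  have hS : ∀ ρ ∈ S, χ.LFunction ρ = 0 ∧ 0 < ρ.re ∧ ρ.re < 1 ∧ T₀ < |ρ.im| := by
    intro ρ hρ
    rw [hSd, Finset.mem_map] at hρ
    obtain ⟨x, _, rfl⟩ := hρ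
    exact x.2
  rw [hsum]
  rcases le_total ((Real.pi * δ) ^ 2) (2 * T₀ / 3) with hD | hD
  · have h := hz_main_S δ q χ hχ T₀ (14 / 75 * (3 / 2)) (T₀ / (3 / 2)) hT (by norm_num) (by norm_num)
      (by linarith) (by linarith) (by ring) S hS
    refine h.trans (mul_le_mul_of_nonneg_left ((hz_num1 T₀ hT).trans ?_) hTl)
    have := Real.exp_pos (-0.1065 * T₀ ^ 2 / (Real.pi * δ) ^ 2)
    linarith
  · set D := (Real.pi * δ) ^ 2 with hDd
    have hD0 : 0 < D := by linarith
    have hD1 : 150 * D ≤ T₀ ^ 2 := by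
      have h1 : (4 * Real.pi ^ 2 * |δ|) ^ 2 ≤ T₀ ^ 2 := by gcongr
      have h2 : (4 * Real.pi ^ 2 * |δ|) ^ 2 = 16 * Real.pi ^ 2 * D := by
        rw [hDd, mul_pow, sq_abs]; ring
      have h3 : 150 ≤ 16 * Real.pi ^ 2 := by nlinarith [Real.pi_gt_d6]
      have h4 := mul_le_mul_of_nonneg_right h3 hD0.le
      linarith
    have hr0 : 0 < T₀ / D := by positivity
    have hr1 : T₀ / D ≤ 3 / 2 := by rw [div_le_iff₀ hD0]; linarith
    have hy : 150 ≤ T₀ / D * T₀ := by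
      rw [div_mul_eq_mul_div, le_div_iff₀ hD0]; linarith
    have eD : T₀ / (T₀ / D) = D := by field_simp
    have h := hz_main_S δ q χ hχ T₀ (14 / 75 * (T₀ / D)) (T₀ / (T₀ / D)) hT (by positivity) (by linarith)
      (by linarith) (by rw [eD]) (by field_simp) S hS
    refine h.trans (mul_le_mul_of_nonneg_left ((hz_num2 T₀ (T₀ / D) hT hr0 hr1 hy).trans_eq ?_) hTl)
    have e : -0.1065 * T₀ ^ 2 / D = -0.1065 * (T₀ / D * T₀) := by ring
    rw [e]
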